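/- arXiv:2302.09623 — 5 statements merged into one kernel-verified Lean document; each statement's English description precedes it below -/
import Mathlib

section
/- Let F : 𝕋 → ℂ be absolutely continuous with Ḟ ∈ L¹(𝕋), and let f = P[F] be its Poisson integral. Then P[Ḟ](0) = 0 and for all z ∈ 𝔻, P[Ḟ](z) + i P̃[Ḟ](z) = 2 i z f_z(z), where P̃[Ḟ] is the conjugate Poisson integral of Ḟ. -/
open MeasureTheory Complex Metric Set Filter
open scoped Real Topology ENNReal

noncomputable section

/-- The Poisson kernel `P(z) = (1-|z|^2)/|1-z|^2`. -/
def poissonKer (z : ℂ) : ℝ := (1 - ‖z‖ ^ 2) / ‖1 - z‖ ^ 2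

/-- The Poisson integral of a boundary function `F` defined on the unit circle. -/
def poissonInt (F : ℂ → ℂ) (z : ℂ) : ℂ :=
  (1 / (2 * π)) * ∫ t in (0:ℝ)..(2 * π),
    (poissonKer (z * Complex.exp (-(t : ℂ) * Complex.I)) : ℂ) *
      F (Complex.exp ((t : ℂ) * Complex.I))

/-- The Poisson integral of a (2π-periodic) function of the angular variable. -/
def poissonIntR (φ : ℝ → ℂ) (z : ℂ) : ℂ :=
  (1 / (2 * π)) * ∫ t in (0:ℝ)..(2 * π),
    (poissonKer (z * Complex.exp (-(t : ℂ) * Complex.I)) : ℂ) * φ t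

/-- The conjugate Poisson kernel `P̃(z) = Im((1+z)/(1-z))`. -/
def conjPoissonKer (z : ℂ) : ℝ := ((1 + z) / (1 - z)).im

/-- The conjugate Poisson integral of a function of the angular variable. -/
def conjPoissonIntR (φ : ℝ → ℂ) (z : ℂ) : ℂ :=
  (1 / (2 * π)) * ∫ t in (0:ℝ)..(2 * π),
    (conjPoissonKer (z * Complex.exp (-(t : ℂ) * Complex.I)) : ℂ) * φ t

/-- Wirtinger derivative `f_z = (1/2)(∂ₓ - i ∂_y) f`. -/
def wdz (f : ℂ → ℂ) (z : ℂ) : ℂ :=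
  (1 / 2) * (fderiv ℝ f z 1 - Complex.I * fderiv ℝ f z Complex.I)

/-- Wirtinger derivative `f_z̄ = (1/2)(∂ₓ + i ∂_y) f`. -/
def wdzb (f : ℂ → ℂ) (z : ℂ) : ℂ :=
  (1 / 2) * (fderiv ℝ f z 1 + Complex.I * fderiv ℝ f z Complex.I)

/-- The angular derivative `f_θ(z) = i (z f_z(z) - z̄ f_z̄(z))`. -/
def fTheta (f : ℂ → ℂ) (z : ℂ) : ℂ :=
  Complex.I * (z * wdz f z - (starRingEnd ℂ) z * wdzb f z)

/-- The radial derivative multiplied by `r`: `r f_r(z) = z f_z(z) + z̄ f_z̄(z)`. -/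
def rFr (f : ℂ → ℂ) (z : ℂ) : ℂ :=
  z * wdz f z + (starRingEnd ℂ) z * wdzb f z

/-- `F : 𝕋 → ℂ` is absolutely continuous with angular derivative `Ḟ = Fd`,
i.e. `t ↦ F(e^{it})` is an indefinite integral of the (locally integrable,
2π-periodic) function `Fd`. -/
def IsACDeriv (F : ℂ → ℂ) (Fd : ℝ → ℂ) : Prop :=
  (∀ a b : ℝ, IntervalIntegrable Fd MeasureTheory.volume a b) ∧
  Function.Periodic Fd (2 * π) ∧
  ∀ t : ℝ, F (Complex.exp ((t : ℂ) * Complex.I)) = F 1 + ∫ s in (0:ℝ)..t, Fd s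

/-- membership in `L^p(𝕋)`, identifying `𝕋` with `[0, 2π)`. -/
def MemLpT (p : ℝ≥0∞) (φ : ℝ → ℂ) : Prop :=
  MeasureTheory.MemLp φ p (MeasureTheory.volume.restrict (Ioc (0:ℝ) (2 * π)))

/-- The integral mean `M_p(r, g)`. -/
def Mp (p : ℝ) (g : ℂ → ℂ) (r : ℝ) : ℝ :=
  ((1 / (2 * π)) * ∫ θ in (0:ℝ)..(2 * π),
      ‖g ((r : ℂ) * Complex.exp ((θ : ℂ) * Complex.I))‖ ^ p) ^ (1 / p)

/-- The `L^p(𝕋)` norm `((1/2π) ∫ |φ|^p)^{1/p}`. -/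
def lpNormT (p : ℝ) (φ : ℝ → ℂ) : ℝ :=
  ((1 / (2 * π)) * ∫ t in (0:ℝ)..(2 * π), ‖φ t‖ ^ p) ^ (1 / p)

/-- Membership in the analytic Hardy space `H^p(𝔻)` for `p ∈ [1, ∞)`. -/
def MemHp (p : ℝ) (g : ℂ → ℂ) : Prop :=
  DifferentiableOn ℂ g (ball (0:ℂ) 1) ∧ ∃ M : ℝ, ∀ r ∈ Ioo (0:ℝ) 1, Mp p g r ≤ M

/-- Membership in `H^∞(𝔻)`: bounded analytic functions on the unit disk. -/
def MemHinf (g : ℂ → ℂ) : Prop :=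
  DifferentiableOn ℂ g (ball (0:ℂ) 1) ∧ ∃ M : ℝ, ∀ z ∈ ball (0:ℂ) 1, ‖g z‖ ≤ M

/-- Harmonicity on the unit disk: `f` is C² with vanishing Laplacian. -/
def HarmonicOnD (f : ℂ → ℂ) : Prop :=
  ContDiffOn ℝ 2 f (ball (0:ℂ) 1) ∧
  ∀ z ∈ ball (0:ℂ) 1,
    fderiv ℝ (fun w => fderiv ℝ f w 1) z 1
      + fderiv ℝ (fun w => fderiv ℝ f w Complex.I) z Complex.I = 0

/-- Membership in the harmonic Hardy space `h^p(𝔻)` for `p ∈ [1, ∞)`. -/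
def Memhp (p : ℝ) (g : ℂ → ℂ) : Prop :=
  HarmonicOnD g ∧ ∃ M : ℝ, ∀ r ∈ Ioo (0:ℝ) 1, Mp p g r ≤ M

/-- Membership in `h^∞(𝔻)`: bounded harmonic functions on the unit disk. -/
def Memhinf (g : ℂ → ℂ) : Prop :=
  HarmonicOnD g ∧ ∃ M : ℝ, ∀ z ∈ ball (0:ℂ) 1, ‖g z‖ ≤ M

/-- `L` is the value of the principal-value Hilbert transform
`(1/2π) p.v. ∫ φ(t)/tan((θ-t)/2) dt` of (the 2π-periodic) `φ` at `θ`. -/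
def IsPVHilbert (φ : ℝ → ℂ) (θ : ℝ) (L : ℂ) : Prop :=
  Filter.Tendsto
    (fun ε : ℝ => (1 / (2 * π)) *
      ∫ t in Ioo (θ - π) (θ + π) \ Ioo (θ - ε) (θ + ε),
        φ t / (Real.tan ((θ - t) / 2) : ℂ))
    (nhdsWithin 0 (Ioi 0)) (nhds L)

theorem aux_ibp (h h' u : ℝ → ℂ) (T : ℝ) (hT : 0 ≤ T) (hd : ∀ t, HasDerivAt h (h' t) t)
    (hc : Continuous h') (hu : IntervalIntegrable u volume 0 T) :
    ∫ t in (0:ℝ)..T, h t * u t = h T * (∫ t in (0:ℝ)..T, u t)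
      - ∫ s in (0:ℝ)..T, h' s * ∫ t in (0:ℝ)..s, u t := by
  have hcc : Continuous h := continuous_iff_continuousAt.2 fun t => (hd t).continuousAt
  have e1 : ∀ t, h t = h T - ∫ s in t..T, h' s := by
    intro t
    rw [intervalIntegral.integral_eq_sub_of_hasDerivAt (fun x _ => hd x)
      (hc.intervalIntegrable _ _)]
    ring
  have i2 : IntervalIntegrable (fun t => (h T - h t) * u t) volume 0 T :=
    hu.continuousOn_mul (by fun_prop)
  have e2 : ∫ t in (0:ℝ)..T, h t * u t = h T * (∫ t in (0:ℝ)..T, u t)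
      - ∫ t in (0:ℝ)..T, (h T - h t) * u t := by
    rw [← intervalIntegral.integral_const_mul, ← intervalIntegral.integral_sub (hu.const_mul _) i2]
    congr 1; ext t; ring
  rw [e2]
  congr 1
  set μ := volume.restrict (Ioc (0:ℝ) T) with hμ
  let K : ℝ → ℝ → ℂ := fun t s => {p : ℝ × ℝ | p.1 < p.2}.indicator (fun p => u p.1 * h' p.2) (t, s)
  have hK : Integrable (Function.uncurry K) (μ.prod μ) := by
    have hu' : Integrable u μ := (intervalIntegrable_iff_integrableOn_Ioc_of_le hT).1 hu
    have hh' : Integrable h' μ :=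
      (intervalIntegrable_iff_integrableOn_Ioc_of_le hT).1 (hc.intervalIntegrable 0 T)
    exact (hu'.mul_prod hh').indicator (measurableSet_lt measurable_fst measurable_snd)
  have key := integral_integral_swap hK
  rw [intervalIntegral.integral_of_le hT, intervalIntegral.integral_of_le hT]
  have l : ∫ t in Ioc 0 T, (h T - h t) * u t = ∫ t, ∫ s, K t s ∂μ ∂μ := by
    apply setIntegral_congr_fun measurableSet_Ioc
    intro t ht
    have : (fun s => K t s) = (Ioi t).indicator (fun s => u t * h' s) := by
      ext s; simp [K, indicator]
    simp only [this]
    rw [integral_indicator measurableSet_Ioi, hμ, Measure.restrict_restrict measurableSet_Ioi]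
    have hs : Ioi t ∩ Ioc 0 T = Ioc t T := by
      ext s; simp only [mem_inter_iff, mem_Ioi, mem_Ioc]
      exact ⟨fun a => ⟨a.1, a.2.2⟩, fun a => ⟨a.1, ht.1.trans a.1, a.2⟩⟩
    rw [hs, integral_const_mul, ← intervalIntegral.integral_of_le ht.2,
      intervalIntegral.integral_eq_sub_of_hasDerivAt (fun x _ => hd x)
      (hc.intervalIntegrable _ _)]
    ring
  have r : ∫ s in Ioc 0 T, (h' s * ∫ t in (0:ℝ)..s, u t) = ∫ s, ∫ t, K t s ∂μ ∂μ := by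
    apply setIntegral_congr_fun measurableSet_Ioc
    intro s hs
    have : (fun t => K t s) = (Iio s).indicator (fun t => u t * h' s) := by
      ext t; simp [K, indicator]
    simp only [this]
    rw [integral_indicator measurableSet_Iio, hμ, Measure.restrict_restrict measurableSet_Iio]
    have hs' : Iio s ∩ Ioc 0 T = Ioo 0 s := by
      ext t; simp only [mem_inter_iff, mem_Iio, mem_Ioc, mem_Ioo]
      exact ⟨fun a => ⟨a.2.1, a.1⟩, fun a => ⟨a.2, a.1, a.2.le.trans hs.2⟩⟩
    rw [hs', integral_mul_const, ← integral_Ioc_eq_integral_Ioo,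
      ← intervalIntegral.integral_of_le hs.1.le]
    ring
  rw [l, r, key]

def Hk (w : ℂ) : ℂ := (1 + w) / (1 - w)

theorem Hk_deriv (w : ℂ) (hw : 1 - w ≠ 0) : HasDerivAt Hk (2 / (1 - w) ^ 2) w := by
  have := ((hasDerivAt_id w).const_add 1).div ((hasDerivAt_id w).const_sub 1) hw
  refine this.congr_deriv ?_
  simp only [id]
  congr 1; ring

theorem norm_w (z : ℂ) (t : ℝ) : ‖z * Complex.exp (-(t : ℂ) * Complex.I)‖ = ‖z‖ := by
  have : -(t:ℂ) * Complex.I = ((-t : ℝ) : ℂ) * Complex.I := by push_cast; ring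
  rw [norm_mul, this, Complex.norm_exp_ofReal_mul_I, mul_one]

theorem low (w : ℂ) (r : ℝ) (h : ‖w‖ ≤ r) : 1 - r ≤ ‖1 - w‖ := by
  have := norm_sub_norm_le (1:ℂ) w
  rw [norm_one] at this; linarith

theorem ne_w (w : ℂ) (h : ‖w‖ < 1) : 1 - w ≠ 0 := by
  have := low w _ le_rfl
  intro h0; rw [h0, norm_zero] at this; linarith

theorem aux_diff (g : ℝ → ℂ) (hg : Continuous g) (z : ℂ) (hz : ‖z‖ < 1) :
    HasDerivAt (fun z : ℂ => ∫ t in (0:ℝ)..(2 * π), Hk (z * Complex.exp (-(t : ℂ) * Complex.I)) * g t)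
      (∫ t in (0:ℝ)..(2 * π), 2 / (1 - z * Complex.exp (-(t : ℂ) * Complex.I)) ^ 2
        * Complex.exp (-(t : ℂ) * Complex.I) * g t) z := by
  have hc : ∀ w : ℂ, ‖w‖ < 1 →
      Continuous (fun t : ℝ => Hk (w * Complex.exp (-(t : ℂ) * Complex.I)) * g t) := by
    intro w hw
    unfold Hk
    refine Continuous.mul (Continuous.div (by fun_prop) (by fun_prop) fun t => ?_) hg
    exact ne_w _ (by rw [norm_w]; exact hw)
  set r := (1 + ‖z‖) / 2 with hr
  have hr1 : r < 1 := by rw [hr]; linarith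
  have hb : ∀ w ∈ ball z ((1 - ‖z‖) / 2), ‖w‖ < r := by
    intro w hw
    rw [mem_ball, dist_eq_norm] at hw
    have := norm_le_norm_add_norm_sub' w z
    rw [hr]; linarith
  refine (intervalIntegral.hasDerivAt_integral_of_dominated_loc_of_deriv_le
    (F := fun z t => Hk (z * Complex.exp (-(t : ℂ) * Complex.I)) * g t)
    (F' := fun z t => 2 / (1 - z * Complex.exp (-(t : ℂ) * Complex.I)) ^ 2
        * Complex.exp (-(t : ℂ) * Complex.I) * g t)
    (bound := fun t => 2 / (1 - r) ^ 2 * ‖g t‖)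
    (s := ball z ((1 - ‖z‖) / 2)) (ball_mem_nhds _ (by linarith)) ?_ ?_ ?_ ?_ ?_ ?_).2
  · filter_upwards [ball_mem_nhds z (show 0 < (1 - ‖z‖) / 2 by linarith)] with w hw
    exact (hc w ((hb w hw).trans hr1)).aestronglyMeasurable
  · exact (hc z hz).intervalIntegrable _ _
  · apply Continuous.aestronglyMeasurable
    refine Continuous.mul (Continuous.mul (Continuous.div (by fun_prop) (by fun_prop) fun t => ?_) (by fun_prop)) hg
    exact pow_ne_zero _ (ne_w _ (by rw [norm_w]; exact hz))
  · refine ae_of_all _ fun t _ w hw => ?_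
    have h1 := low (w * Complex.exp (-(t : ℂ) * Complex.I)) r (by rw [norm_w]; exact (hb w hw).le)
    have h2 : ‖Complex.exp (-(t : ℂ) * Complex.I)‖ = 1 := by simpa using norm_w 1 t
    have h3 : 0 < 1 - r := by linarith
    rw [norm_mul, norm_mul, h2, mul_one, norm_div, norm_pow]
    simp only [Complex.norm_ofNat]
    gcongr
  · exact (by fun_prop : Continuous fun t => 2 / (1 - r) ^ 2 * ‖g t‖).intervalIntegrable _ _
  · refine ae_of_all _ fun t _ w hw => ?_
    have h0 : ‖w * Complex.exp (-(t : ℂ) * Complex.I)‖ < 1 := by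
      rw [norm_w]; exact (hb w hw).trans hr1
    have := (Hk_deriv _ (ne_w _ h0)).comp w ((hasDerivAt_id w).mul_const (Complex.exp (-(t : ℂ) * Complex.I)))
    simpa using this.mul_const (g t)

theorem pk_re (w : ℂ) : poissonKer w = (Hk w).re := by
  unfold poissonKer Hk
  rw [Complex.div_re, Complex.sq_norm, Complex.sq_norm, Complex.normSq_apply w, ← add_div]
  congr 1
  simp; ring

theorem pk_half (w : ℂ) : (poissonKer w : ℂ) = (Hk w + (starRingEnd ℂ) (Hk w)) / 2 := by
  rw [pk_re, Complex.add_conj]; push_cast; ring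

theorem pk_sum (w : ℂ) : (poissonKer w : ℂ) + Complex.I * (conjPoissonKer w : ℂ) = Hk w := by
  rw [pk_re, mul_comm]; exact Complex.re_add_im _

theorem conj_intervalIntegral (g : ℝ → ℂ) (a b : ℝ) :
    (starRingEnd ℂ) (∫ t in a..b, g t) = ∫ t in a..b, (starRingEnd ℂ) (g t) := by
  simp only [intervalIntegral, map_sub, integral_conj]

theorem cont_Hk (z : ℂ) (hz : ‖z‖ < 1) :
    Continuous (fun t : ℝ => Hk (z * Complex.exp (-(t : ℂ) * Complex.I))) := by
  unfold Hk
  refine Continuous.div (by fun_prop) (by fun_prop) fun t => ?_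
  exact ne_w _ (by rw [norm_w]; exact hz)

theorem poissonInt_eq (F : ℂ → ℂ) (g : ℝ → ℂ) (hg : Continuous g)
    (hF : ∀ t : ℝ, F (Complex.exp ((t : ℂ) * Complex.I)) = g t) (z : ℂ) (hz : ‖z‖ < 1) :
    poissonInt F z = (1 / (2 * π)) * (1 / 2) *
      ((∫ t in (0:ℝ)..(2 * π), Hk (z * Complex.exp (-(t : ℂ) * Complex.I)) * g t) +
        (starRingEnd ℂ) (∫ t in (0:ℝ)..(2 * π),
          Hk (z * Complex.exp (-(t : ℂ) * Complex.I)) * (starRingEnd ℂ) (g t))) := by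
  have c := cont_Hk z hz
  have cg : Continuous fun t => (starRingEnd ℂ) (g t) := Complex.continuous_conj.comp hg
  unfold poissonInt
  have k1 : Continuous fun t : ℝ => Hk (z * Complex.exp (-(t : ℂ) * Complex.I)) * g t := c.mul hg
  have k2 : Continuous fun t : ℝ => (starRingEnd ℂ)
      (Hk (z * Complex.exp (-(t : ℂ) * Complex.I)) * (starRingEnd ℂ) (g t)) :=
    Complex.continuous_conj.comp (c.mul cg)
  rw [conj_intervalIntegral, ← intervalIntegral.integral_add (k1.intervalIntegrable _ _)
    (k2.intervalIntegrable _ _), mul_assoc,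
    ← intervalIntegral.integral_const_mul (1 / 2 : ℂ)]
  congr 2
  ext t
  rw [hF, pk_half, map_mul, Complex.conj_conj]
  ring

theorem wdz_eq (F : ℂ → ℂ) (g : ℝ → ℂ) (hg : Continuous g)
    (hF : ∀ t : ℝ, F (Complex.exp ((t : ℂ) * Complex.I)) = g t) (z : ℂ) (hz : ‖z‖ < 1) :
    wdz (poissonInt F) z = (1 / (2 * π)) * (1 / 2) *
      (∫ t in (0:ℝ)..(2 * π), 2 / (1 - z * Complex.exp (-(t : ℂ) * Complex.I)) ^ 2
        * Complex.exp (-(t : ℂ) * Complex.I) * g t) := by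
  have cg : Continuous fun t => (starRingEnd ℂ) (g t) := Complex.continuous_conj.comp hg
  have hA := (aux_diff g hg z hz).hasFDerivAt.restrictScalars ℝ
  have hB := (aux_diff _ cg z hz).hasFDerivAt.restrictScalars ℝ
  have hB' := (Complex.conjCLE.toContinuousLinearMap.hasFDerivAt).comp z hB
  have hf := (hA.add hB').const_mul ((1 / (2 * π)) * (1 / 2) : ℂ)
  have hf' := hf.congr_of_eventuallyEq (f₁ := poissonInt F) (by
    filter_upwards [isOpen_ball.mem_nhds (show z ∈ ball (0:ℂ) 1 by simpa using hz)] with w hw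
    exact poissonInt_eq F g hg hF w (by simpa using hw))
  unfold wdz
  rw [hf'.fderiv]
  clear hf' hf hB' hB hA
  generalize (∫ t in (0:ℝ)..(2 * π), 2 / (1 - z * Complex.exp (-(t : ℂ) * Complex.I)) ^ 2
        * Complex.exp (-(t : ℂ) * Complex.I) * g t) = A
  generalize (∫ t in (0:ℝ)..(2 * π), 2 / (1 - z * Complex.exp (-(t : ℂ) * Complex.I)) ^ 2
        * Complex.exp (-(t : ℂ) * Complex.I) * (starRingEnd ℂ) (g t)) = B
  simp
  ring_nf
  rw [Complex.I_sq]
  ring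

theorem stmt11 (F : ℂ → ℂ) (Fd : ℝ → ℂ)
    (hF : IsACDeriv F Fd) (hL1 : MemLpT 1 Fd) :
    poissonIntR Fd 0 = 0 ∧
    ∀ z ∈ ball (0:ℂ) 1,
      poissonIntR Fd z + Complex.I * conjPoissonIntR Fd z
        = 2 * Complex.I * z * wdz (poissonInt F) z := by
  obtain ⟨hint, -, hG⟩ := hF
  have h0 : ∫ s in (0:ℝ)..(2 * π), Fd s = 0 := by
    have := hG (2 * π)
    push_cast at this
    rw [Complex.exp_two_pi_mul_I] at this
    simpa using this
  refine ⟨by simp [poissonIntR, poissonKer, h0], ?_⟩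
  intro z hz
  have hz : ‖z‖ < 1 := by simpa using hz
  have hgc0 : Continuous fun t : ℝ => ∫ s in (0:ℝ)..t, Fd s :=
    intervalIntegral.continuous_primitive hint 0
  have hgc : Continuous fun t : ℝ => F 1 + ∫ s in (0:ℝ)..t, Fd s := hgc0.const_add _ 
  rw [wdz_eq F _ hgc hG z hz]
  have c := cont_Hk z hz
  have c1 : Continuous fun t : ℝ => (poissonKer (z * Complex.exp (-(t : ℂ) * Complex.I)) : ℂ) := by
    simp only [pk_re]; fun_prop
  have c2 : Continuous fun t : ℝ => (conjPoissonKer (z * Complex.exp (-(t : ℂ) * Complex.I)) : ℂ) :=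
    Complex.continuous_ofReal.comp (Complex.continuous_im.comp c)
  have lhs : poissonIntR Fd z + Complex.I * conjPoissonIntR Fd z = (1 / (2 * π)) *
      ∫ t in (0:ℝ)..(2 * π), Hk (z * Complex.exp (-(t : ℂ) * Complex.I)) * Fd t := by
    unfold poissonIntR conjPoissonIntR
    rw [mul_left_comm, ← mul_add, ← intervalIntegral.integral_const_mul,
      ← intervalIntegral.integral_add ((hint _ _).continuousOn_mul c1.continuousOn)
      (((hint _ _).continuousOn_mul c2.continuousOn).const_mul _)]
    congr 2
    ext t
    rw [← pk_sum]; ring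
  rw [lhs]
  let h' : ℝ → ℂ := fun t => 2 / (1 - z * Complex.exp (-(t : ℂ) * Complex.I)) ^ 2 *
    (z * (Complex.exp (-(t : ℂ) * Complex.I) * (-Complex.I)))
  have hd : ∀ t : ℝ, HasDerivAt (fun t : ℝ => Hk (z * Complex.exp (-(t : ℂ) * Complex.I))) (h' t) t := by
    intro t
    have e : HasDerivAt (fun t : ℝ => -(t : ℂ) * Complex.I) (-Complex.I) t := by
      simpa using ((Complex.ofRealCLM.hasDerivAt (x := t)).neg).mul_const Complex.I
    exact (Hk_deriv _ (ne_w _ (by rw [norm_w]; exact hz))).comp t (e.cexp.const_mul z)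
  have hc : Continuous h' := by
    refine Continuous.mul (Continuous.div (by fun_prop) (by fun_prop) fun t => ?_) (by fun_prop)
    exact pow_ne_zero _ (ne_w _ (by rw [norm_w]; exact hz))
  have hT : (0:ℝ) ≤ 2 * π := by positivity
  rw [aux_ibp _ h' Fd (2 * π) hT hd hc (hint _ _), h0]
  have hz0 : ∫ t in (0:ℝ)..(2 * π), h' t = 0 := by
    rw [intervalIntegral.integral_eq_sub_of_hasDerivAt (fun x _ => hd x) (hc.intervalIntegrable _ _)]
    have : Complex.exp (-((2 * π : ℝ) : ℂ) * Complex.I) = 1 := by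
      push_cast
      rw [neg_mul, Complex.exp_neg, Complex.exp_two_pi_mul_I, inv_one]
    rw [this]; simp
  have hs : ∫ s in (0:ℝ)..(2 * π), h' s * ∫ t in (0:ℝ)..s, Fd t
      = ∫ s in (0:ℝ)..(2 * π), h' s * (F 1 + ∫ t in (0:ℝ)..s, Fd t) := by
    simp only [mul_add]
    have k1 : Continuous fun s => h' s * F 1 := hc.mul continuous_const
    have k2 : Continuous fun s => h' s * ∫ t in (0:ℝ)..s, Fd t := hc.mul hgc0
    rw [intervalIntegral.integral_add (k1.intervalIntegrable _ _)
      (k2.intervalIntegrable _ _), intervalIntegral.integral_mul_const, hz0]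
    simp
  have hs2 : ∫ s in (0:ℝ)..(2 * π), h' s * (F 1 + ∫ t in (0:ℝ)..s, Fd t)
      = (-Complex.I * z) * ∫ t in (0:ℝ)..(2 * π), 2 / (1 - z * Complex.exp (-(t : ℂ) * Complex.I)) ^ 2
        * Complex.exp (-(t : ℂ) * Complex.I) * (F 1 + ∫ s in (0:ℝ)..t, Fd s) := by
    rw [← intervalIntegral.integral_const_mul]
    congr 1
    ext t
    simp only [h']; ring
  rw [hs, hs2]
  ring

end
end

section
/- Let p ∈ [1, ∞), let F : 𝕋 → ℂ be absolutely continuous with Ḟ ∈ L^p(𝕋), and let f = P[F] be its Poisson integral. Then both f_z and the conjugate of f_z̄ belong to the Bergman space B^p(𝔻), i.e., ∫_𝔻 |f_z(z)|^p dσ(z) < ∞ and ∫_𝔻 |f_z̄(z)|^p dσ(z) < ∞, where dσ is the normalized Lebesgue area measure on 𝔻. -/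
open MeasureTheory Complex Metric Set Filter
open scoped Real Topology ENNReal

noncomputable section

lemma ac_integral_complex {φ : ℝ → ℂ} {a b : ℝ} (h : IntervalIntegrable φ volume a b) :
    AbsolutelyContinuousOnInterval (fun x => ∫ t in a..x, φ t) a b := by
  have hre : IntervalIntegrable (fun t => (φ t).re) volume a b := ⟨h.1.re, h.2.re⟩
  have him : IntervalIntegrable (fun t => (φ t).im) volume a b := ⟨h.1.im, h.2.im⟩
  have h1 := hre.absolutelyContinuousOnInterval_intervalIntegral (c := a) (by simp)
  have h2 := him.absolutelyContinuousOnInterval_intervalIntegral (c := a) (by simp)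
  have hc : ∀ c : ℂ, AbsolutelyContinuousOnInterval (fun _ : ℝ => c) a b := fun c =>
    (contDiff_const.contDiffOn (𝕜 := ℝ)).absolutelyContinuousOnInterval
  have h3 := (h1.fun_smul (hc 1)).fun_add (h2.fun_smul (hc I))
  have key : ∀ x ∈ uIcc a b, ∫ t in a..x, φ t =
      (∫ t in a..x, (φ t).re) • (1:ℂ) + (∫ t in a..x, (φ t).im) • I := by
    intro x hx
    have hsub : uIcc a x ⊆ uIcc a b := uIcc_subset_uIcc_left hx
    have hr := hre.mono_set hsub
    have hi := him.mono_set hsub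
    rw [← intervalIntegral.integral_smul_const, ← intervalIntegral.integral_smul_const,
      ← intervalIntegral.integral_add]
    · congr 1; ext t; simp [Complex.re_add_im]
    · exact ⟨hr.1.smul_const _, hr.2.smul_const _⟩
    · exact ⟨hi.1.smul_const _, hi.2.smul_const _⟩
  rw [absolutelyContinuousOnInterval_iff] at h3 ⊢
  intro ε hε
  obtain ⟨δ, hδ, H⟩ := h3 ε hε
  refine ⟨δ, hδ, fun E hE hE' => ?_⟩
  convert H E hE hE' using 2 with i hi
  have := hE.1 i hi
  rw [key _ this.1, key _ this.2]

lemma ibp {φd k kd : ℝ → ℂ} {c : ℂ} {a b : ℝ} 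
    (h : IntervalIntegrable φd volume a b)
    (hk : ∀ t, HasDerivAt k (kd t) t) (hkd : Continuous kd) :
    ∫ t in a..b, kd t * (c + ∫ s in a..t, φd s) =
      k b * (c + ∫ s in a..b, φd s) - k a * c - ∫ t in a..b, k t * φd t := by
  set φ : ℝ → ℂ := fun t => c + ∫ s in a..t, φd s with hφ
  have hkc : Continuous k := continuous_iff_continuousAt.2 fun t => (hk t).continuousAt
  have hc : AbsolutelyContinuousOnInterval (fun _ : ℝ => c) a b := 
    (contDiff_const.contDiffOn (𝕜 := ℝ)).absolutelyContinuousOnInterval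
  have hφac : AbsolutelyContinuousOnInterval φ a b := hc.fun_add (ac_integral_complex h)
  have hkac : AbsolutelyContinuousOnInterval k a b := by
    apply ContDiffOn.absolutelyContinuousOnInterval
    apply ContDiff.contDiffOn
    rw [contDiff_one_iff_deriv]
    refine ⟨fun t => (hk t).differentiableAt, ?_⟩
    convert hkd
    ext t; exact (hk t).deriv
  have hφc := hφac.continuousOn
  have i1 : IntervalIntegrable (fun t => kd t * φ t) volume a b :=
    (hkd.continuousOn.mul hφc).intervalIntegrable
  have i2 : IntervalIntegrable (fun t => k t * φd t) volume a b :=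
    h.continuousOn_mul hkc.continuousOn
  have i3 := i1.add i2
  have hac := (hkac.fun_smul hφac).fun_sub (ac_integral_complex i3)
  obtain ⟨C, hC⟩ := hac.const_of_ae_hasDerivAt_zero (by
    filter_upwards [h.ae_hasDerivAt_integral, i3.ae_hasDerivAt_integral] with x h1 h2 hx
    have e1 := (h1 hx a (by simp)).const_add c
    have e2 := h2 hx a (by simp)
    have e3 := ((hk x).mul e1).sub e2
    have e4 : kd x * (c + ∫ (t : ℝ) in a..x, φd t) + k x * φd x - (kd x * φ x + k x * φd x) = 0 := by
      simp only [hφ]; ring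
    rw [e4] at e3
    exact e3)
  have ha := hC a (by simp)
  have hb := hC b (by simp)
  have hadd := intervalIntegral.integral_add i1 i2
  simp only [hadd] at ha hb
  simp [hφ] at ha hb ⊢
  rw [← ha] at hb
  linear_combination -hb

lemma holder_aux {α : Type*} [MeasurableSpace α] (μ : Measure α) {p s : ℝ} (hp : 1 ≤ p)
    {g k : α → ℝ≥0∞} (hg : AEMeasurable g μ) (hk : AEMeasurable k μ)
    (h0 : ∀ x, k x ≠ 0) (ht : ∀ x, k x ≠ ⊤) :
    (∫⁻ x, g x * k x ∂μ) ^ p ≤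
      (∫⁻ x, k x ^ s ∂μ) ^ (p - 1) * ∫⁻ x, g x ^ p * k x ^ (p - s * (p - 1)) ∂μ := by
  rcases hp.eq_or_lt with rfl | hp
  · simp
  have hpq := Real.HolderConjugate.conjExponent hp
  set q := p.conjExponent with hq
  have hp0 : 0 < p := by linarith
  have hq0 : 0 < q := hpq.symm.pos
  have hpq' : p / q = p - 1 := by
    rw [hq, Real.conjExponent]; field_simp
  have H := ENNReal.lintegral_mul_le_Lp_mul_Lq μ hpq (f := fun x => g x * k x ^ (1 - s / q))
    (g := fun x => k x ^ (s / q)) (hg.mul (hk.pow_const _)) (hk.pow_const _)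
  have e1 : ∀ x, ((fun x => g x * k x ^ (1 - s / q)) * fun x => k x ^ (s / q)) x = g x * k x := by
    intro x
    simp only [Pi.mul_apply]
    rw [mul_assoc, ← ENNReal.rpow_add _ _ (h0 x) (ht x)]
    simp
  have e2 : ∀ x, (g x * k x ^ (1 - s / q)) ^ p = g x ^ p * k x ^ (p - s * (p - 1)) := by
    intro x
    rw [ENNReal.mul_rpow_of_nonneg _ _ hp0.le, ← ENNReal.rpow_mul, ← hpq']
    congr 2; ring
  have e3 : ∀ x, (k x ^ (s / q)) ^ q = k x ^ s := by
    intro x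
    rw [← ENNReal.rpow_mul]; congr 1; field_simp
  simp only [e1, e2, e3] at H
  calc _ ≤ _ := ENNReal.rpow_le_rpow H hp0.le
    _ = _ := by
      rw [ENNReal.mul_rpow_of_nonneg _ _ hp0.le, ← ENNReal.rpow_mul, ← ENNReal.rpow_mul, mul_comm]
      congr 2
      · rw [← hpq']; ring
      · rw [one_div_mul_cancel hp0.ne', ENNReal.rpow_one]

lemma ker_pos {z : ℂ} (hz : ‖z‖ < 1) (t : ℝ) : 0 < ‖exp (t * I) - z‖ := by
  have := norm_sub_norm_le (exp (t * I)) z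
  rw [norm_exp_ofReal_mul_I] at this
  linarith

lemma ker_lower {z : ℂ} (hz : ‖z‖ < 1) (t : ℝ) (ht : |t - z.arg| ≤ π) :
    |t - z.arg| / π ≤ ‖exp (t * I) - z‖ := by
  have h1 : ‖exp (t * I) - exp (z.arg * I)‖ ≤ 2 * ‖exp (t * I) - z‖ := by
    have a1 : ‖z - exp (z.arg * I)‖ = 1 - ‖z‖ := by
      have : z - exp (z.arg * I) = ((‖z‖ - 1 : ℝ) : ℂ) * exp (z.arg * I) := by
        have h0 := norm_mul_exp_arg_mul_I z
        push_cast
        linear_combination -h0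
      rw [this, norm_mul, norm_exp_ofReal_mul_I, norm_real, Real.norm_eq_abs, abs_of_neg] <;> linarith
    have a2 := norm_sub_norm_le (exp (t * I)) z
    rw [norm_exp_ofReal_mul_I] at a2
    have a3 := norm_sub_le_norm_sub_add_norm_sub (exp (t * I)) z (exp (z.arg * I))
    linarith
  have h2 : exp (t * I) - exp (z.arg * I) = (exp (I * ((t - z.arg : ℝ) : ℂ)) - 1) * exp (z.arg * I) := by
    rw [sub_mul, ← exp_add, one_mul]
    congr 2
    push_cast; ring
  rw [h2, norm_mul, norm_exp_ofReal_mul_I, mul_one, norm_exp_I_mul_ofReal_sub_one, norm_mul] at h1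
  have h3 := Real.mul_abs_le_abs_sin (x := (t - z.arg) / 2) (by rw [abs_div]; norm_num; linarith)
  rw [abs_div, abs_two] at h3
  simp only [Real.norm_eq_abs, abs_two] at h1
  have : 2 / π * (|t - z.arg| / 2) = |t - z.arg| / π := by ring
  linarith

lemma ker_cont {z : ℂ} (hz : ‖z‖ < 1) (s : ℝ) :
    Continuous (fun t : ℝ => ‖exp (t * I) - z‖ ^ s) := by
  apply Continuous.rpow_const (by fun_prop)
  intro t; left; exact (ker_pos hz t).ne'

lemma ker_one {s : ℝ} (hs0 : 0 < s) (hs : s < 1) : ∃ M : ℝ, ∀ z : ℂ, ‖z‖ < 1 →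
    ∫⁻ t in Ioc 0 (2 * π), ENNReal.ofReal (‖exp (t * I) - z‖ ^ (-s)) ≤ ENNReal.ofReal M := by
  refine ⟨∫ u in (-π)..π, (|u| / π) ^ (-s), fun z hz => ?_⟩
  have hpi := Real.pi_pos
  rw [← ofReal_integral_eq_lintegral_ofReal]
  rotate_left
  · exact ((ker_cont hz (-s)).integrableOn_Icc).mono_set Ioc_subset_Icc_self
  · exact Eventually.of_forall fun t => by positivity
  apply ENNReal.ofReal_le_ofReal
  rw [← intervalIntegral.integral_of_le (by positivity)]
  have hper : Function.Periodic (fun t : ℝ => ‖exp (t * I) - z‖ ^ (-s)) (2 * π) := by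
    intro t
    have : exp (((t + 2 * π : ℝ) : ℂ) * I) = exp (t * I) := by
      push_cast; rw [add_mul, exp_add, exp_two_pi_mul_I, mul_one]
    simp only [this]
  have h := hper.intervalIntegral_add_eq 0 (-π + z.arg)
  rw [zero_add, show -π + z.arg + 2 * π = π + z.arg by ring,
    ← intervalIntegral.integral_comp_add_right] at h
  rw [h]
  have hi : IntegrableOn (fun u : ℝ => (|u| / π) ^ (-s)) (ball 0 (2 * π)) := by
    apply integrableOn_ball_of_norm_le_rpow (C := π ^ s) (α := s) (by simp) (by simpa using hs)
    · refine Eventually.of_forall fun u => ?_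
      rw [Real.norm_of_nonneg (by positivity), Real.div_rpow (by positivity) hpi.le,
        Real.rpow_neg hpi.le, div_inv_eq_mul, mul_comm, Real.norm_eq_abs]
    · exact (by fun_prop : Measurable fun u : ℝ => (|u| / π) ^ (-s)).aestronglyMeasurable
  have hsub : Icc (-π) π ⊆ ball (0:ℝ) (2 * π) := by
    intro u hu
    rw [mem_ball_zero_iff, Real.norm_eq_abs]
    have := abs_le.2 hu
    linarith
  apply intervalIntegral.integral_mono_ae_restrict (by linarith)
  · apply Continuous.intervalIntegrable
    exact (ker_cont hz (-s)).comp (continuous_id.add continuous_const)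
  · rw [intervalIntegrable_iff_integrableOn_Icc_of_le (by linarith)]
    exact hi.mono_set hsub
  · have hne : ∀ᵐ x : ℝ, x ≠ 0 := by simp [ae_iff, measure_singleton]
    filter_upwards [ae_restrict_mem measurableSet_Icc, ae_restrict_of_ae hne] with u hu hu0
    · have := ker_lower hz (u + z.arg) (by simpa using abs_le.2 hu)
      simp only [add_sub_cancel_right] at this
      apply Real.rpow_le_rpow_of_nonpos _ this (by linarith)
      have := abs_pos.2 hu0
      positivity

lemma ker_two {e : ℝ} (he : e < 2) : ∃ C : ℝ≥0∞, C < ⊤ ∧ ∀ ζ : ℂ, ‖ζ‖ = 1 →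
    ∫⁻ z in ball (0:ℂ) 1, ENNReal.ofReal (‖ζ - z‖ ^ (-e)) ≤ C := by
  refine ⟨∫⁻ w in ball (0:ℂ) 2, ENNReal.ofReal (‖w‖ ^ (-e)), ?_, fun ζ hζ => ?_⟩
  · have hi : IntegrableOn (fun u : ℂ => ‖u‖ ^ (-e)) (ball 0 2) := by
      apply integrableOn_ball_of_norm_le_rpow (C := 1) (α := e) (by simp) (by simpa using he)
      · refine Eventually.of_forall fun u => ?_
        rw [Real.norm_of_nonneg (by positivity), one_mul]
      · exact (by fun_prop : Measurable fun u : ℂ => ‖u‖ ^ (-e)).aestronglyMeasurable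
    exact hi.lintegral_lt_top
  · rw [← lintegral_indicator measurableSet_ball, ← lintegral_indicator measurableSet_ball,
      
      ← lintegral_sub_left_eq_self
        ((ball (0:ℂ) 2).indicator fun w => ENNReal.ofReal (‖w‖ ^ (-e))) ζ]
    apply lintegral_mono
    intro z
    beta_reduce
    by_cases hz : z ∈ ball (0:ℂ) 1
    · have : ζ - z ∈ ball (0:ℂ) 2 := by
        rw [mem_ball_zero_iff] at *
        have := norm_sub_le ζ z
        linarith
      rw [indicator_of_mem hz, indicator_of_mem this]
    · simp [indicator_of_notMem hz]

lemma schur {p : ℝ} (hp : 1 ≤ p) {φd : ℝ → ℂ}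
    (h : MemLp φd (ENNReal.ofReal p) (volume.restrict (Ioc 0 (2 * π)))) :
    ∫⁻ z in ball (0:ℂ) 1, (∫⁻ t in Ioc 0 (2 * π),
      ‖φd t‖ₑ * ENNReal.ofReal (‖exp (t * I) - z‖⁻¹)) ^ p < ⊤ := by
  have hp0 : 0 < p := by linarith
  set s : ℝ := 1 - 1 / (2 * p) with hs
  have hs1 : s < 1 := by
    have : 0 < 1 / (2 * p) := by positivity
    linarith
  have hs0 : 0 < s := by
    rw [hs, sub_pos, div_lt_one (by positivity)]; linarith
  have he : p - s * (p - 1) < 2 := by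
    have : p - s * (p - 1) = 3 / 2 - 1 / (2 * p) := by rw [hs]; field_simp; ring
    have : 0 < 1 / (2 * p) := by positivity
    linarith
  obtain ⟨M, hM⟩ := ker_one hs0 hs1
  obtain ⟨C, hC, hC'⟩ := ker_two he
  set e := p - s * (p - 1) with he'
  set μ : Measure ℝ := volume.restrict (Ioc 0 (2 * π)) with hμ
  have hgm : AEMeasurable (fun t => ‖φd t‖ₑ) μ := h.1.enorm
  have hfin : ∫⁻ t, ‖φd t‖ₑ ^ p ∂μ < ⊤ := by
    have := lintegral_rpow_enorm_lt_top_of_eLpNorm_lt_top (by simpa using hp0) (by simp) h.2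
    simpa [ENNReal.toReal_ofReal hp0.le] using this
  have hpow : ∀ z : ℂ, ‖z‖ < 1 → ∀ (t : ℝ) (a : ℝ), ENNReal.ofReal (‖exp (t * I) - z‖⁻¹) ^ a
      = ENNReal.ofReal (‖exp (t * I) - z‖ ^ (-a)) := by
    intro z hz t a
    have := ker_pos hz t
    rw [ENNReal.ofReal_rpow_of_pos (by positivity), Real.inv_rpow this.le, Real.rpow_neg this.le]
  calc _ ≤ ∫⁻ z in ball (0:ℂ) 1, ENNReal.ofReal M ^ (p - 1) *
        ∫⁻ t, ‖φd t‖ₑ ^ p * ENNReal.ofReal (‖exp (t * I) - z‖ ^ (-e)) ∂μ := by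
        apply setLIntegral_mono' measurableSet_ball
        intro z hz
        rw [mem_ball_zero_iff] at hz
        have H := holder_aux μ (s := s) hp hgm
          (k := fun t => ENNReal.ofReal (‖exp (t * I) - z‖⁻¹)) (by fun_prop)
          (fun t => by simpa using ker_pos hz t |>.ne') (fun t => by simp)
        refine H.trans ?_
        simp only [hpow z hz]
        gcongr
        · exact hM z hz
    _ = ENNReal.ofReal M ^ (p - 1) * ∫⁻ z in ball (0:ℂ) 1,
        ∫⁻ t, ‖φd t‖ₑ ^ p * ENNReal.ofReal (‖exp (t * I) - z‖ ^ (-e)) ∂μ := by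
        rw [lintegral_const_mul' _ _ (by simp [hp])]
    _ = ENNReal.ofReal M ^ (p - 1) * ∫⁻ t, ∫⁻ z in ball (0:ℂ) 1, 
          ‖φd t‖ₑ ^ p * ENNReal.ofReal (‖exp (t * I) - z‖ ^ (-e)) ∂volume ∂μ := by
        rw [lintegral_lintegral_swap]
        apply AEMeasurable.mul
        · exact (hgm.pow_const p).comp_snd
        · apply Measurable.aemeasurable
          fun_prop
    _ ≤ ENNReal.ofReal M ^ (p - 1) * ∫⁻ t, ‖φd t‖ₑ ^ p * C ∂μ := by
        gcongr with t
        rw [lintegral_const_mul' _ _ (by simp [hp0.le])]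
        gcongr
        exact hC' _ (norm_exp_ofReal_mul_I t)
    _ = ENNReal.ofReal M ^ (p - 1) * ((∫⁻ t, ‖φd t‖ₑ ^ p ∂μ) * C) := by
        rw [lintegral_mul_const' _ _ hC.ne]
    _ < ⊤ := by
        apply ENNReal.mul_lt_top
        · exact ENNReal.rpow_lt_top_of_nonneg (by linarith) (by simp)
        · exact ENNReal.mul_lt_top hfin hC

def cauchyG (φ : ℝ → ℂ) (z : ℂ) : ℂ :=
  (1 / (2 * π)) * ∫ t in (0:ℝ)..(2 * π), (1 - z * exp (-(t:ℂ) * I))⁻¹ * φ t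

lemma norm_exp_neg (t : ℝ) : ‖exp (-(t:ℂ) * I)‖ = 1 := by
  have := norm_exp_ofReal_mul_I (-t)
  simpa using this

lemma one_sub_lower (z : ℂ) (t : ℝ) : 1 - ‖z‖ ≤ ‖1 - z * exp (-(t:ℂ) * I)‖ := by
  have := norm_sub_norm_le 1 (z * exp (-(t:ℂ) * I))
  rwa [norm_mul, norm_exp_neg, norm_one, mul_one] at this

lemma one_sub_ne {z : ℂ} (hz : ‖z‖ < 1) (t : ℝ) : 1 - z * exp (-(t:ℂ) * I) ≠ 0 := by
  have := one_sub_lower z t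
  rw [← norm_pos_iff]; linarith

lemma norm_one_sub (z : ℂ) (t : ℝ) : ‖1 - z * exp (-(t:ℂ) * I)‖ = ‖exp (t * I) - z‖ := by
  have : 1 - z * exp (-(t:ℂ) * I) = (exp (t * I) - z) * exp (-(t:ℂ) * I) := by
    rw [sub_mul, ← exp_add]; simp
  rw [this, norm_mul, norm_exp_neg, mul_one]

lemma cauchyG_hasDerivAt {φ : ℝ → ℂ} (hφ : Continuous φ) {z : ℂ} (hz : ‖z‖ < 1) :
    HasDerivAt (cauchyG φ) ((1 / (2 * π)) * ∫ t in (0:ℝ)..(2 * π),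
      exp (-(t:ℂ) * I) / (1 - z * exp (-(t:ℂ) * I)) ^ 2 * φ t) z := by
  obtain ⟨r, hr1, hr2⟩ := exists_between hz
  have hs : ball (0:ℂ) r ∈ 𝓝 z := isOpen_ball.mem_nhds (by simpa using hr1)
  refine HasDerivAt.const_mul _ ?_
  refine (intervalIntegral.hasDerivAt_integral_of_dominated_loc_of_deriv_le
    (F := fun z t => (1 - z * exp (-(t:ℂ) * I))⁻¹ * φ t)
    (F' := fun z t => exp (-(t:ℂ) * I) / (1 - z * exp (-(t:ℂ) * I)) ^ 2 * φ t)
    (bound := fun t => ((1 - r) ^ 2)⁻¹ * ‖φ t‖) hs ?_ ?_ ?_ ?_ ?_ ?_).2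
  · filter_upwards [hs] with x hx
    have hx : ‖x‖ < 1 := by rw [mem_ball_zero_iff] at hx; linarith
    apply Continuous.aestronglyMeasurable
    exact (Continuous.inv₀ (by fun_prop) (one_sub_ne hx)).mul hφ
  · apply Continuous.intervalIntegrable
    exact (Continuous.inv₀ (by fun_prop) (one_sub_ne hz)).mul hφ
  · apply Continuous.aestronglyMeasurable
    exact (Continuous.div (by fun_prop) (by fun_prop) (fun t => pow_ne_zero 2 (one_sub_ne hz t))).mul hφ
  · refine Eventually.of_forall fun t _ x hx => ?_
    rw [mem_ball_zero_iff] at hx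
    have h1 := one_sub_lower x t
    rw [norm_mul, norm_div, norm_exp_neg, norm_pow, one_div]
    have : 0 < 1 - r := by linarith
    gcongr
    linarith
  · exact (Continuous.intervalIntegrable (by fun_prop) _ _)
  · refine Eventually.of_forall fun t _ x hx => ?_
    have hx : ‖x‖ < 1 := by rw [mem_ball_zero_iff] at hx; linarith
    have h1 : HasDerivAt (fun x : ℂ => 1 - x * exp (-(t:ℂ) * I)) (-(1 * exp (-(t:ℂ) * I))) x :=
      ((hasDerivAt_id x).mul_const _).const_sub 1
    have h2 := (h1.inv (one_sub_ne hx t)).mul_const (φ t)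
    refine h2.congr_deriv ?_
    ring

lemma cauchyG_deriv {φ φd : ℝ → ℂ} {c : ℂ} (hφd : ∀ a b, IntervalIntegrable φd volume a b)
    (hφ : ∀ t, φ t = c + ∫ s in (0:ℝ)..t, φd s) (hper : φ (2 * π) = c) {z : ℂ} (hz : ‖z‖ < 1) :
    deriv (cauchyG φ) z = -(I / (2 * π)) * ∫ t in (0:ℝ)..(2 * π),
      exp (-(t:ℂ) * I) / (1 - z * exp (-(t:ℂ) * I)) * φd t := by
  have hcont : Continuous φ := by
    rw [funext hφ]
    exact continuous_const.add (intervalIntegral.continuous_primitive hφd 0)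
  rw [(cauchyG_hasDerivAt hcont hz).deriv]
  have hk : ∀ t : ℝ, HasDerivAt (fun t : ℝ => exp (-(t:ℂ) * I) / (1 - z * exp (-(t:ℂ) * I)))
      (-I * (exp (-(t:ℂ) * I) / (1 - z * exp (-(t:ℂ) * I)) ^ 2)) t := by
    intro t
    have h1 : HasDerivAt (fun t : ℝ => exp (-(t:ℂ) * I)) (exp (-(t:ℂ) * I) * (-1 * I)) t :=
      ((((hasDerivAt_id t).ofReal_comp).neg).mul_const I).cexp
    have h2 := h1.div ((h1.const_mul z).const_sub 1) (one_sub_ne hz t)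
    refine h2.congr_deriv ?_
    rw [← mul_div_assoc]
    congr 1
    ring
  have H := ibp (c := c) (hφd 0 (2 * π)) hk (by
    apply continuous_const.mul
    exact (Continuous.div (by fun_prop) (by fun_prop) (fun t => pow_ne_zero 2 (one_sub_ne hz t))))
  simp only [← hφ, hper] at H
  have hexp : exp (-(((2 * π : ℝ)) : ℂ) * I) = exp (-((0:ℝ):ℂ) * I) := by
    push_cast
    rw [neg_mul, exp_neg, exp_two_pi_mul_I]; simp
  rw [hexp, sub_self, zero_sub] at H
  simp only [mul_assoc] at H
  rw [intervalIntegral.integral_const_mul] at H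
  have hI : (I:ℂ) * I = -1 := I_mul_I
  linear_combination (I / (2 * π)) * H + (1 / (2 * π)) * (∫ t in (0:ℝ)..(2 * π),
      exp (-(t:ℂ) * I) / (1 - z * exp (-(t:ℂ) * I)) ^ 2 * φ t) * hI

lemma core {p : ℝ} (hp : 1 ≤ p) {φ φd : ℝ → ℂ} {c : ℂ}
    (hφd : ∀ a b, IntervalIntegrable φd volume a b)
    (hφ : ∀ t, φ t = c + ∫ s in (0:ℝ)..t, φd s) (hper : φ (2 * π) = c)
    (h : MemLp φd (ENNReal.ofReal p) (volume.restrict (Ioc 0 (2 * π)))) :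
    DifferentiableOn ℂ (cauchyG φ) (ball 0 1) ∧
    DifferentiableOn ℂ (deriv (cauchyG φ)) (ball 0 1) ∧
    IntegrableOn (fun z => ‖deriv (cauchyG φ) z‖ ^ p) (ball 0 1) := by
  have hcont : Continuous φ := by
    rw [funext hφ]
    exact continuous_const.add (intervalIntegral.continuous_primitive hφd 0)
  have d1 : DifferentiableOn ℂ (cauchyG φ) (ball 0 1) := fun z hz =>
    (cauchyG_hasDerivAt hcont (by simpa using hz)).differentiableAt.differentiableWithinAt
  have d2 := d1.deriv isOpen_ball
  refine ⟨d1, d2, ?_, ?_⟩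
  · apply ContinuousOn.aestronglyMeasurable _ measurableSet_ball
    exact d2.continuousOn.norm.rpow_const (fun _ _ => Or.inr (by linarith))
  · refine lt_of_le_of_lt ?_ (schur hp h)
    apply setLIntegral_mono' measurableSet_ball
    intro z hz
    rw [mem_ball_zero_iff] at hz
    rw [Real.enorm_rpow_of_nonneg (by positivity) (by linarith), enorm_norm]
    gcongr
    rw [cauchyG_deriv hφd hφ hper hz, enorm_mul, intervalIntegral.integral_of_le (by positivity)]
    have hc : ‖-(I / (2 * π) : ℂ)‖ₑ ≤ 1 := by
      rw [← ofReal_norm, ENNReal.ofReal_le_one, norm_neg, norm_div, norm_I, norm_mul, norm_real,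
        Real.norm_of_nonneg Real.pi_pos.le, Complex.norm_two, div_le_one (by positivity)]
      linarith [Real.pi_gt_three]
    calc _ ≤ 1 * ∫⁻ t in Ioc 0 (2 * π),
          ‖exp (-(t:ℂ) * I) / (1 - z * exp (-(t:ℂ) * I)) * φd t‖ₑ := by
          gcongr
          exact enorm_integral_le_lintegral_enorm _
      _ = _ := by
          rw [one_mul]
          congr 1 with t
          rw [enorm_mul, mul_comm]
          congr 1
          rw [← ofReal_norm, norm_div, norm_exp_neg, norm_one_sub, one_div]

lemma poisson_decomp {F : ℂ → ℂ} (hc : Continuous fun t : ℝ => F (exp ((t:ℂ) * I))) {z : ℂ}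
    (hz : ‖z‖ < 1) :
    poissonInt F z = cauchyG (fun t => F (exp (t * I))) z +
      (starRingEnd ℂ) (cauchyG (fun t => (starRingEnd ℂ) (F (exp (t * I)))) z) -
      (1 / (2 * π)) * ∫ t in (0:ℝ)..(2 * π), F (exp (t * I)) := by
  have hker : ∀ t : ℝ, (poissonKer (z * exp (-(t:ℂ) * I)) : ℂ) = (1 - z * exp (-(t:ℂ) * I))⁻¹
      + (starRingEnd ℂ) ((1 - z * exp (-(t:ℂ) * I))⁻¹) - 1 := by
    intro t
    have hne := one_sub_ne hz t
    set w := z * exp (-(t:ℂ) * I)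
    have hne' : (starRingEnd ℂ) (1 - w) ≠ 0 := (map_ne_zero _).2 hne
    unfold poissonKer
    push_cast
    rw [← mul_conj', ← mul_conj', map_inv₀]
    field_simp
    simp only [map_sub, map_one]
    ring
  have c1 : Continuous fun t : ℝ => (1 - z * exp (-(t:ℂ) * I))⁻¹ :=
    Continuous.inv₀ (by fun_prop) (one_sub_ne hz)
  have hconj : (starRingEnd ℂ) (∫ t in (0:ℝ)..(2 * π),
      (1 - z * exp (-(t:ℂ) * I))⁻¹ * (starRingEnd ℂ) (F (exp (t * I)))) =
      ∫ t in (0:ℝ)..(2 * π), (starRingEnd ℂ) ((1 - z * exp (-(t:ℂ) * I))⁻¹) * F (exp (t * I)) := by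
    rw [intervalIntegral.integral_of_le (by positivity),
      intervalIntegral.integral_of_le (by positivity), ← integral_conj]
    simp
  unfold poissonInt cauchyG
  rw [map_mul, hconj]
  have hpi : (starRingEnd ℂ) (1 / (2 * π) : ℂ) = 1 / (2 * π) := by
    have : (1 / (2 * π) : ℂ) = ((1 / (2 * π) : ℝ) : ℂ) := by push_cast; rfl
    rw [this, conj_ofReal]
  rw [hpi, ← mul_add, ← mul_sub, ← intervalIntegral.integral_add, ← intervalIntegral.integral_sub]
  · congr 2 with t
    rw [hker]; ring
  all_goals 
    apply Continuous.intervalIntegrable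
  · exact (c1.mul hc).add ((continuous_conj.comp c1).mul hc)
  · exact hc
  · exact c1.mul hc
  · exact (continuous_conj.comp c1).mul hc

lemma wd_decomp {f A B : ℂ → ℂ} {c : ℂ} (hf : ∀ z ∈ ball (0:ℂ) 1, f z = A z + (starRingEnd ℂ) (B z) - c)
    (hA : DifferentiableOn ℂ A (ball 0 1)) (hB : DifferentiableOn ℂ B (ball 0 1)) {z : ℂ}
    (hz : z ∈ ball (0:ℂ) 1) :
    wdz f z = deriv A z ∧ wdzb f z = (starRingEnd ℂ) (deriv B z) := by
  have hn := isOpen_ball.mem_nhds hz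
  have a := ((hA.differentiableAt hn).hasDerivAt.hasFDerivAt).restrictScalars ℝ
  have b := ((hB.differentiableAt hn).hasDerivAt.hasFDerivAt).restrictScalars ℝ
  have b' := (conjCLE : ℂ ≃L[ℝ] ℂ).toContinuousLinearMap.hasFDerivAt.comp z b
  have e : HasFDerivAt f _ z := ((a.add b').sub_const c).congr_of_eventuallyEq (by
    filter_upwards [hn] with w hw
    exact hf w hw)
  unfold wdz wdzb
  rw [e.fderiv]
  simp
  constructor
  · ring_nf; simp; ring
  · ring_nf; simp; ring

/-- For `p ∈ [1,∞)`, `F : 𝕋 → ℂ` absolutely continuous with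
`Ḟ ∈ L^p(𝕋)` and `f = P[F]`, both `f_z` and `conj (f_z̄)` belong to the Bergman space
`B^p(𝔻)`: they are analytic on `𝔻` and `∫_𝔻 |f_z|^p dσ < ∞`, `∫_𝔻 |f_z̄|^p dσ < ∞`. -/
theorem stmt13 (p : ℝ) (hp : 1 ≤ p) (F : ℂ → ℂ) (Fd : ℝ → ℂ)
    (hF : IsACDeriv F Fd) (hLp : MemLpT (ENNReal.ofReal p) Fd) :
    DifferentiableOn ℂ (wdz (poissonInt F)) (ball (0:ℂ) 1) ∧
    DifferentiableOn ℂ (fun z => (starRingEnd ℂ) (wdzb (poissonInt F) z)) (ball (0:ℂ) 1) ∧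
    MeasureTheory.IntegrableOn (fun z => ‖wdz (poissonInt F) z‖ ^ p) (ball (0:ℂ) 1) volume ∧
    MeasureTheory.IntegrableOn (fun z => ‖wdzb (poissonInt F) z‖ ^ p) (ball (0:ℂ) 1) volume := by
  obtain ⟨hint, hper, hFt⟩ := hF
  have hcont : Continuous fun t : ℝ => F (exp ((t:ℂ) * I)) := by
    rw [funext hFt]
    exact continuous_const.add (intervalIntegral.continuous_primitive hint 0)
  have h2π : F (exp (((2 * π : ℝ) : ℂ) * I)) = F 1 := by
    push_cast; rw [exp_two_pi_mul_I]
  obtain ⟨a1, a2, a3⟩ := core hp hint hFt h2π hLp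
  have hint' : ∀ a b, IntervalIntegrable (fun t => (starRingEnd ℂ) (Fd t)) volume a b := fun a b =>
    ⟨conjCLE.toContinuousLinearMap.integrable_comp (hint a b).1,
      conjCLE.toContinuousLinearMap.integrable_comp (hint a b).2⟩
  obtain ⟨b1, b2, b3⟩ := core hp (φ := fun t : ℝ => (starRingEnd ℂ) (F (exp ((t:ℂ) * I))))
    (φd := fun t => (starRingEnd ℂ) (Fd t)) (c := (starRingEnd ℂ) (F 1)) hint' (by
      intro t
      rw [hFt, map_add, intervalIntegral, intervalIntegral, integral_conj, integral_conj, map_sub])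
      (by rw [h2π])
      (hLp.of_le (continuous_conj.comp_aestronglyMeasurable hLp.1) (by simp))
  have key := fun z hz => wd_decomp (f := poissonInt F) (z := z)
    (fun z hz => poisson_decomp hcont (by simpa using hz)) a1 b1 hz
  refine ⟨a2.congr fun z hz => (key z hz).1, b2.congr fun z hz => ?_,
    a3.congr_fun (fun z hz => ?_) measurableSet_ball, b3.congr_fun (fun z hz => ?_) measurableSet_ball⟩
  · simp only [(key z hz).2, conj_conj]
  · simp only [(key z hz).1]
  · simp only [(key z hz).2, norm_conj]

end
end

section
/- Let F : 𝕋 → ℂ be defined by F(e^{it}) = |t| for t ∈ [−π, π], and let f = P[F] be its Poisson integral. Then for every z ∈ 𝔻, i z f_z(z) = −(2i/π) Σ_{n≥0} z^{2n+1}/(2n+1) = −(i/π) log((1+z)/(1−z)) (principal branch of the logarithm). In particular |f_z(r)| → ∞ as r → 1⁻, so f_z is not bounded on 𝔻, even though Ḟ ∈ L^∞(𝕋). -/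
open MeasureTheory Complex Metric Set Filter
open scoped Real Topology ENNReal

noncomputable section

lemma aux_log (z : ℂ) (hz : ‖z‖ < 1) :
    HasSum (fun n : ℕ => z ^ (2 * n + 1) / (2 * (n : ℂ) + 1)) (1/2 * Complex.log ((1 + z) / (1 - z))) := by
  have h := Complex.hasSum_arctan (z := -I * z) (by simpa using hz)
  have h2 := h.mul_left I
  have e1 : I * Complex.arctan (-I * z) = 1/2 * Complex.log ((1 + z) / (1 - z)) := by
    unfold Complex.arctan
    have : -I * z * I = z := by linear_combination (-z) * I_mul_I
    rw [this]
    linear_combination (-1/2 * Complex.log ((1 + z) / (1 - z))) * I_mul_I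
  rw [e1] at h2
  convert! h2 using 1
  ext n
  have : (-I * z)^(2*n+1) = (-1)^n * (-I) * z^(2*n+1) := by
    rw [mul_pow, pow_succ (-I), pow_mul]
    simp
  rw [this]
  have e : ((-1:ℂ)^n) * (-1)^n = 1 := by rw [← mul_pow]; simp
  push_cast
  linear_combination (z^(2*n+1) / (2 * (n:ℂ)+1)) * (I * I) * e + (z^(2*n+1) / (2 * (n:ℂ)+1)) * I_mul_I

lemma aux_four (c : ℤ) (hc : c ≠ 0) :
    ∫ t in (-π)..π, Complex.exp ((c:ℂ) * t * I) * ((|t| : ℝ) : ℂ) = 2 * ((-1) ^ c - 1) / (c:ℂ)^2 := by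
  have hc' : (c:ℂ) ≠ 0 := by exact_mod_cast hc
  have hd : ∀ t : ℝ, HasDerivAt (fun t : ℝ => Complex.exp ((c:ℂ) * t * I) * (-I * t / c + 1 / (c:ℂ)^2))
      (Complex.exp ((c:ℂ) * t * I) * t) t := by
    intro t
    have h0 : HasDerivAt (fun t : ℝ => (t:ℂ)) 1 t := ofRealCLM.hasDerivAt
    have h1 := (((h0.const_mul (c:ℂ)).mul_const I).cexp).mul (((h0.const_mul (-I)).div_const (c:ℂ)).add_const (1 / (c:ℂ)^2))
    convert! h1 using 1
    field_simp
    linear_combination (t * c) * I_mul_I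
  have hci : ∀ a b : ℝ, IntervalIntegrable (fun t : ℝ => Complex.exp ((c:ℂ) * t * I) * t) volume a b :=
    fun a b => Continuous.intervalIntegrable (by fun_prop) a b
  have hci' : ∀ a b : ℝ, IntervalIntegrable (fun t : ℝ => Complex.exp ((c:ℂ) * t * I) * ((|t|:ℝ):ℂ)) volume a b :=
    fun a b => Continuous.intervalIntegrable (by fun_prop) a b
  have hi : ∀ a b : ℝ, ∫ t in a..b, Complex.exp ((c:ℂ) * t * I) * t = _ := fun a b =>
    intervalIntegral.integral_eq_sub_of_hasDerivAt (fun t _ => hd t) (hci a b)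
  rw [← intervalIntegral.integral_add_adjacent_intervals (hci' (-π) 0) (hci' 0 π)]
  have e1 : ∫ t in (-π)..0, Complex.exp ((c:ℂ) * t * I) * ((|t|:ℝ):ℂ) = - ∫ t in (-π)..0, Complex.exp ((c:ℂ) * t * I) * t := by
    rw [← intervalIntegral.integral_neg]
    apply intervalIntegral.integral_congr
    intro t ht
    rw [uIcc_of_le (by linarith [Real.pi_pos])] at ht
    simp [abs_of_nonpos ht.2]
  have e2 : ∫ t in (0:ℝ)..π, Complex.exp ((c:ℂ) * t * I) * ((|t|:ℝ):ℂ) = ∫ t in (0:ℝ)..π, Complex.exp ((c:ℂ) * t * I) * t := by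
    apply intervalIntegral.integral_congr
    intro t ht
    rw [uIcc_of_le (by linarith [Real.pi_pos])] at ht
    simp [abs_of_nonneg ht.1]
  have e3 : Complex.exp ((c:ℂ) * π * I) = (-1)^c := by
    rw [mul_assoc, Complex.exp_int_mul, Complex.exp_pi_mul_I]
  have e4 : Complex.exp ((c:ℂ) * ((-π:ℝ):ℂ) * I) = (-1)^c := by
    have : (c:ℂ) * ((-π:ℝ):ℂ) * I = ((-c : ℤ):ℂ) * (π * I) := by push_cast; ring
    rw [this, Complex.exp_int_mul, Complex.exp_pi_mul_I, zpow_neg, ← inv_zpow]; norm_num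
  rw [e1, e2, hi, hi, e3, e4]
  simp
  field_simp
  ring

lemma aux_ker (w : ℂ) (hw : ‖w‖ < 1) :
    HasSum (fun n : ℕ => w ^ n + (starRingEnd ℂ w) ^ n) ((poissonKer w : ℂ) + 1) := by
  have h1 := hasSum_geometric_of_norm_lt_one hw
  have h2 := hasSum_geometric_of_norm_lt_one (ξ := starRingEnd ℂ w) (by simpa using hw)
  convert! h1.add h2 using 1
  have hne : 1 - w ≠ 0 := by
    intro h
    have : w = 1 := by linear_combination -h
    rw [this] at hw; simp at hw
  have hne' : 1 - starRingEnd ℂ w ≠ 0 := by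
    intro h
    apply hne
    have := congrArg (starRingEnd ℂ) h
    simpa using this
  unfold poissonKer
  push_cast
  rw [← Complex.mul_conj', ← Complex.mul_conj', map_sub, map_one]
  field_simp
  ring

lemma aux_int (F : ℂ → ℂ)
    (hFval : ∀ t ∈ Icc (-π) π, F (Complex.exp ((t : ℂ) * Complex.I)) = ((|t| : ℝ) : ℂ)) (z : ℂ) :
    poissonInt F z = (1 / (2 * π)) * ∫ t in (-π)..π,
      (poissonKer (z * Complex.exp (-(t : ℂ) * Complex.I)) : ℂ) * ((|t| : ℝ) : ℂ) := by
  unfold poissonInt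
  congr 1
  have hp : Function.Periodic (fun t : ℝ => (poissonKer (z * Complex.exp (-(t : ℂ) * Complex.I)) : ℂ) *
      F (Complex.exp ((t : ℂ) * Complex.I))) (2 * π) := by
    intro t
    have h1 : Complex.exp (((t + 2 * π : ℝ) : ℂ) * Complex.I) = Complex.exp ((t : ℂ) * Complex.I) := by
      push_cast
      rw [add_mul, Complex.exp_add, Complex.exp_two_pi_mul_I, mul_one]
    have h2 : Complex.exp (-((t + 2 * π : ℝ) : ℂ) * Complex.I) = Complex.exp (-(t : ℂ) * Complex.I) := by
      rw [neg_mul, Complex.exp_neg, h1, neg_mul, Complex.exp_neg]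
    simp only [h1, h2]
  have := hp.intervalIntegral_add_eq 0 (-π)
  rw [zero_add, show -π + 2 * π = π by ring] at this
  rw [this]
  apply intervalIntegral.integral_congr
  intro t ht
  rw [uIcc_of_le (by linarith [Real.pi_pos])] at ht
  simp only [hFval t ht]

def auxH (z : ℂ) : ℂ := -(2/π) * ∑' n : ℕ, z ^ (2 * n + 1) / (2 * (n : ℂ) + 1)^2

lemma aux_summ (z : ℂ) (hz : ‖z‖ < 1) : Summable (fun n : ℕ => z ^ (2 * n + 1) / (2 * (n : ℂ) + 1)^2) := by
  refine Summable.of_norm_bounded (g := fun n : ℕ => (‖z‖^2)^n) (summable_geometric_of_lt_one (by positivity) (by nlinarith [norm_nonneg z])) ?_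
  intro n
  rw [norm_div, norm_pow, norm_pow, ← pow_mul]
  have h1 : ‖(2 * (n:ℂ) + 1)‖ = 2 * n + 1 := by
    rw [show (2 * (n:ℂ) + 1) = ((2 * n + 1 : ℝ):ℂ) by push_cast; ring, Complex.norm_of_nonneg (by positivity)]
  rw [h1, pow_succ, div_le_iff₀ (by positivity)]
  have : (0:ℝ) ≤ n := by positivity
  have h3 : (1:ℝ) ≤ (2 * n + 1)^2 := by nlinarith
  have : 0 ≤ ‖z‖^(2*n) := by positivity
  nlinarith

lemma aux_deriv (z : ℂ) (hz : ‖z‖ < 1) :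
    HasDerivAt auxH (-(2/π) * ∑' n : ℕ, z ^ (2 * n) / (2 * (n : ℂ) + 1)) z := by
  obtain ⟨r, hr, hr1⟩ := exists_between hz
  unfold auxH
  apply HasDerivAt.const_mul
  have hr0 : 0 < r := (norm_nonneg z).trans_lt hr
  refine hasDerivAt_tsum_of_isPreconnected (u := fun n : ℕ => (r^2)^n) (t := ball (0:ℂ) r) (y₀ := z)
    (g' := fun (n:ℕ) (z:ℂ) => z ^ (2 * n) / (2 * (n : ℂ) + 1))
    (summable_geometric_of_lt_one (by positivity) (by nlinarith)) isOpen_ball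
    (convex_ball _ _).isPreconnected ?_ ?_ (by simpa using hr) (aux_summ z hz) (by simpa using hr)
  · intro n y _
    have hne : (2 * (n:ℂ) + 1) ≠ 0 := by exact_mod_cast (show (2 * n + 1 : ℕ) ≠ 0 by omega)
    convert! (hasDerivAt_pow (2*n+1) y).div_const ((2 * (n:ℂ) + 1)^2) using 1
    rw [Nat.add_sub_cancel]
    push_cast
    field_simp
  · intro n y hy
    have hy : ‖y‖ < r := by simpa using hy
    rw [norm_div, norm_pow, ← pow_mul]
    have h1 : ‖(2 * (n:ℂ) + 1)‖ = 2 * n + 1 := by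
      rw [show (2 * (n:ℂ) + 1) = ((2 * n + 1 : ℝ):ℂ) by push_cast; ring, Complex.norm_of_nonneg (by positivity)]
    rw [h1]
    apply (div_le_self (by positivity) (by linarith [(by positivity : (0:ℝ) ≤ n)])).trans
    gcongr

set_option maxHeartbeats 1000000 in
lemma aux_repr (F : ℂ → ℂ)
    (hFval : ∀ t ∈ Icc (-π) π, F (Complex.exp ((t : ℂ) * Complex.I)) = ((|t| : ℝ) : ℂ)) (z : ℂ) (hz : ‖z‖ < 1) :
    poissonInt F z = π / 2 + (auxH z + starRingEnd ℂ (auxH z)) := by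
  have hpi : (π:ℂ) ≠ 0 := by exact_mod_cast Real.pi_ne_zero
  have hconj : ∀ t : ℝ, starRingEnd ℂ (z * Complex.exp (-(t:ℂ) * I)) = starRingEnd ℂ z * Complex.exp ((t:ℂ) * I) := by
    intro t
    rw [map_mul, ← Complex.exp_conj]; simp
  have hnorm : ∀ t : ℝ, ‖z * Complex.exp (-(t:ℂ) * I)‖ = ‖z‖ := by
    intro t
    rw [norm_mul, ← ofReal_neg, Complex.norm_exp_ofReal_mul_I, mul_one]
  set u : ℕ → ℝ → ℂ := fun n t => ((z * Complex.exp (-(t:ℂ) * I))^n + (starRingEnd ℂ (z * Complex.exp (-(t:ℂ) * I)))^n) * ((|t|:ℝ):ℂ) with hu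
  have hsum : HasSum (fun n => ∫ t in (-π)..π, u n t)
      (∫ t in (-π)..π, ((poissonKer (z * Complex.exp (-(t:ℂ) * I)) : ℂ) + 1) * ((|t|:ℝ):ℂ)) := by
    apply intervalIntegral.hasSum_integral_of_dominated_convergence (fun n _ => 2 * ‖z‖^n * π)
    · intro n
      apply Continuous.aestronglyMeasurable
      simp only [hu, hconj]
      fun_prop
    · intro n
      filter_upwards with t ht
      rw [uIoc_of_le (by linarith [Real.pi_pos])] at ht
      simp only [hu]
      rw [norm_mul]
      have h1 : ‖((|t|:ℝ):ℂ)‖ ≤ π := by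
        simp [abs_le]; exact ⟨ht.1.le, ht.2⟩
      have h2 : ‖(z * Complex.exp (-(t:ℂ) * I))^n + (starRingEnd ℂ (z * Complex.exp (-(t:ℂ) * I)))^n‖ ≤ 2 * ‖z‖^n := by
        refine (norm_add_le _ _).trans ?_
        rw [norm_pow, norm_pow, RCLike.norm_conj, hnorm]
        linarith
      gcongr
    · filter_upwards with t _
      exact ((summable_geometric_of_lt_one (norm_nonneg z) hz).mul_left 2).mul_right π
    · exact intervalIntegrable_const
    · filter_upwards with t _
      exact (aux_ker _ (by rw [hnorm]; exact hz)).mul_right _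
  have habs : ∫ t in (-π)..π, ((|t|:ℝ):ℂ) = (π:ℂ)^2 := by
    rw [intervalIntegral.integral_ofReal]
    have hc : ∀ a b : ℝ, IntervalIntegrable (fun t : ℝ => |t|) volume a b := fun a b => Continuous.intervalIntegrable (by fun_prop) a b
    rw [← intervalIntegral.integral_add_adjacent_intervals (hc (-π) 0) (hc 0 π)]
    have e1 : ∫ t in (-π)..0, |t| = ∫ t in (-π)..0, -t := by
      apply intervalIntegral.integral_congr
      intro t ht
      rw [uIcc_of_le (by linarith [Real.pi_pos])] at ht
      simp [abs_of_nonpos ht.2]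
    have e2 : ∫ t in (0:ℝ)..π, |t| = ∫ t in (0:ℝ)..π, t := by
      apply intervalIntegral.integral_congr
      intro t ht
      rw [uIcc_of_le (by linarith [Real.pi_pos])] at ht
      simp [abs_of_nonneg ht.1]
    rw [e1, e2, intervalIntegral.integral_neg, integral_id, integral_id]
    push_cast
    ring
  have hcoef : ∀ n : ℕ, n ≠ 0 → ∫ t in (-π)..π, u n t = 2 * ((-1)^n - 1) / (n:ℂ)^2 * (z^n + (starRingEnd ℂ z)^n) := by
    intro n hn
    have h1 := aux_four (n:ℤ) (by exact_mod_cast hn)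
    have h2 := aux_four (-(n:ℤ)) (by simpa using hn)
    have : ∀ t : ℝ, u n t = z^n * (Complex.exp (((-(n:ℤ) : ℤ):ℂ) * t * I) * ((|t|:ℝ):ℂ)) + (starRingEnd ℂ z)^n * (Complex.exp (((n:ℤ):ℂ) * t * I) * ((|t|:ℝ):ℂ)) := by
      intro t
      simp only [hu, hconj, mul_pow, ← Complex.exp_nat_mul]
      push_cast
      rw [show (n:ℂ) * (-(t:ℂ) * I) = -n * t * I by ring, show (n:ℂ) * ((t:ℂ) * I) = n * t * I by ring]
      ring
    simp only [this]
    rw [intervalIntegral.integral_add (Continuous.intervalIntegrable (by fun_prop) _ _) (Continuous.intervalIntegrable (by fun_prop) _ _),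
      intervalIntegral.integral_const_mul, intervalIntegral.integral_const_mul, h1, h2]
    rw [zpow_neg, ← inv_zpow]
    norm_num
    ring
  have h0 : ∫ t in (-π)..π, u 0 t = 2 * (π:ℂ)^2 := by
    simp only [hu, pow_zero]
    rw [intervalIntegral.integral_const_mul, habs]; norm_num
  -- the sum
  have hs1 := aux_summ z hz
  have hs2 := aux_summ (starRingEnd ℂ z) (by simpa using hz)
  have hodd : HasSum (fun k : ℕ => ∫ t in (-π)..π, u (2 * k + 1) t) (2 * π * (auxH z + starRingEnd ℂ (auxH z))) := by
    have e : starRingEnd ℂ (auxH z) = auxH (starRingEnd ℂ z) := by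
      unfold auxH
      rw [map_mul, Complex.conj_tsum]
      have e2 : starRingEnd ℂ (2:ℂ) = 2 := Complex.conj_ofNat 2
      simp [e2]
    rw [e]
    have := (hs1.hasSum.add hs2.hasSum).mul_left (-4)
    convert! this using 1
    · ext k
      rw [hcoef _ (by omega)]
      rw [pow_succ (-1:ℂ), pow_mul]
      push_cast
      norm_num
      ring
    · unfold auxH
      field_simp
      ring
  have heven : HasSum (fun k : ℕ => ∫ t in (-π)..π, u (2 * k) t) (2 * (π:ℂ)^2) := by
    rw [← h0]
    refine hasSum_single 0 ?_
    intro k hk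
    rw [hcoef _ (by omega), pow_mul]
    norm_num
  have htot := hsum.unique (heven.even_add_odd hodd)
  have hker : IntervalIntegrable (fun t : ℝ => (poissonKer (z * Complex.exp (-(t:ℂ) * I)) : ℂ) * ((|t|:ℝ):ℂ)) volume (-π) π := by
    apply Continuous.intervalIntegrable
    unfold poissonKer
    apply Continuous.mul _ (by fun_prop)
    apply Complex.continuous_ofReal.comp
    apply Continuous.div (by fun_prop) (by fun_prop)
    intro t h
    have h : 1 - z * Complex.exp (-(t:ℂ) * I) = 0 := by simpa using h
    have h' := hnorm t
    rw [← sub_eq_zero.mp h] at h'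
    simp at h'
    linarith
  simp only [add_mul, one_mul] at htot
  rw [intervalIntegral.integral_add hker (Continuous.intervalIntegrable (by fun_prop) _ _), habs] at htot
  rw [aux_int F hFval, eq_sub_of_add_eq htot]
  field_simp
  ring

lemma aux_wdz (F : ℂ → ℂ)
    (hFval : ∀ t ∈ Icc (-π) π, F (Complex.exp ((t : ℂ) * Complex.I)) = ((|t| : ℝ) : ℂ)) (z : ℂ) (hz : ‖z‖ < 1) :
    wdz (poissonInt F) z = -(2/π) * ∑' n : ℕ, z ^ (2 * n) / (2 * (n : ℂ) + 1) := by
  set D := -(2/π) * ∑' n : ℕ, z ^ (2 * n) / (2 * (n : ℂ) + 1) with hD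
  have h1 : HasFDerivAt auxH _ z := (aux_deriv z hz).hasFDerivAt.restrictScalars ℝ
  have h2 := (conjCLE.toContinuousLinearMap.hasFDerivAt (x := auxH z)).comp z h1
  have h3 := (h1.add h2).const_add ((π:ℂ)/2)
  have h4 : poissonInt F =ᶠ[𝓝 z] fun y => (π:ℂ)/2 + (auxH y + starRingEnd ℂ (auxH y)) := by
    filter_upwards [isOpen_ball.mem_nhds (show z ∈ ball (0:ℂ) 1 by simpa using hz)] with y hy
    exact aux_repr F hFval y (by simpa using hy)
  have h5 := h3.congr_of_eventuallyEq h4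
  unfold wdz
  rw [h5.fderiv]
  simp [← hD]
  ring_nf
  simp
  try ring

/-- Let `F(e^{it}) = |t|` for `t ∈ [-π, π]` and `f = P[F]`. Then for
every `z ∈ 𝔻`, `i z f_z(z) = -(2i/π) Σ_{n≥0} z^{2n+1}/(2n+1) = -(i/π) log((1+z)/(1-z))`;
in particular `|f_z(r)| → ∞` as `r → 1⁻`, so `f_z` is not bounded on `𝔻`. -/
theorem stmt14 (F : ℂ → ℂ)
    (hFval : ∀ t ∈ Icc (-π) π, F (Complex.exp ((t : ℂ) * Complex.I)) = ((|t| : ℝ) : ℂ)) :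
    (∀ z ∈ ball (0:ℂ) 1,
      (Complex.I * z * wdz (poissonInt F) z
          = -(2 * Complex.I / (π : ℂ)) * ∑' n : ℕ, z ^ (2 * n + 1) / (2 * (n : ℂ) + 1)) ∧
      (Complex.I * z * wdz (poissonInt F) z
          = -(Complex.I / (π : ℂ)) * Complex.log ((1 + z) / (1 - z)))) ∧
    Filter.Tendsto (fun r : ℝ => ‖wdz (poissonInt F) ((r : ℂ))‖)
      (nhdsWithin 1 (Iio 1)) Filter.atTop ∧
    ¬ ∃ M : ℝ, ∀ z ∈ ball (0:ℂ) 1, ‖wdz (poissonInt F) z‖ ≤ M := by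

  have hpi : (π:ℂ) ≠ 0 := by exact_mod_cast Real.pi_ne_zero
  have hA : ∀ z : ℂ, ‖z‖ < 1 → Complex.I * z * wdz (poissonInt F) z
          = -(2 * Complex.I / (π : ℂ)) * ∑' n : ℕ, z ^ (2 * n + 1) / (2 * (n : ℂ) + 1) := by
    intro z hz
    rw [aux_wdz F hFval z hz]
    have : ∀ n : ℕ, z ^ (2 * n + 1) / (2 * (n : ℂ) + 1) = z * (z ^ (2 * n) / (2 * (n : ℂ) + 1)) := by
      intro n; ring
    simp only [this]
    rw [tsum_mul_left]
    ring
  have hB : ∀ z : ℂ, ‖z‖ < 1 → Complex.I * z * wdz (poissonInt F) z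
          = -(Complex.I / (π : ℂ)) * Complex.log ((1 + z) / (1 - z)) := by
    intro z hz
    rw [hA z hz, (aux_log z hz).tsum_eq]
    ring
  have hT : Filter.Tendsto (fun r : ℝ => ‖wdz (poissonInt F) ((r : ℂ))‖)
      (nhdsWithin 1 (Iio 1)) Filter.atTop := by
    have h1 : Tendsto (fun r : ℝ => 1 - r) (𝓝[<] 1) (𝓝[>] 0) := by
      apply tendsto_nhdsWithin_of_tendsto_nhds_of_eventually_within
      · have : Tendsto (fun r : ℝ => 1 - r) (𝓝 1) (𝓝 (1 - 1)) := Continuous.tendsto (by fun_prop) 1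
        rw [sub_self] at this
        exact this.mono_left nhdsWithin_le_nhds
      · filter_upwards [self_mem_nhdsWithin] with r hr
        simpa using hr
    have h2 := (tendsto_neg_atBot_atTop.comp (Real.tendsto_log_nhdsGT_zero.comp h1)).const_mul_atTop
      (inv_pos.mpr Real.pi_pos)
    refine tendsto_atTop_mono' _ ?_ h2
    filter_upwards [Ioo_mem_nhdsLT (show (0:ℝ) < 1 by norm_num)] with r hr
    have hn : ‖(r:ℂ)‖ < 1 := by rw [Complex.norm_of_nonneg hr.1.le]; exact hr.2
    have h3 := congrArg norm (hB r hn)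
    have h4 : Complex.log ((1 + (r:ℂ)) / (1 - r)) = ((Real.log ((1 + r) / (1 - r)) : ℝ) : ℂ) := by
      rw [Complex.ofReal_log (div_nonneg (by linarith [hr.1]) (by linarith [hr.2]))]
      push_cast; rfl
    rw [h4] at h3
    simp only [norm_mul, norm_neg, norm_div, Complex.norm_I, one_mul, Complex.norm_real, Real.norm_eq_abs,
      abs_of_pos hr.1, abs_of_pos Real.pi_pos] at h3
    have h5 : Real.log ((1 + r) / (1 - r)) = Real.log (1 + r) - Real.log (1 - r) :=
      Real.log_div (by linarith [hr.1]) (by linarith [hr.2])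
    have h6 : 0 ≤ Real.log (1 + r) := Real.log_nonneg (by linarith [hr.1])
    have h7 : - Real.log (1 - r) ≤ |Real.log ((1 + r) / (1 - r))| := by
      refine le_trans ?_ (le_abs_self _)
      rw [h5]; linarith
    calc π⁻¹ * (- Real.log (1 - r)) ≤ π⁻¹ * |Real.log ((1 + r) / (1 - r))| := by
          have := Real.pi_pos
          gcongr
      _ = r * ‖wdz (poissonInt F) r‖ := by rw [h3]; ring
      _ ≤ ‖wdz (poissonInt F) r‖ := mul_le_of_le_one_left (norm_nonneg _) hr.2.le
  refine ⟨fun z hz => ⟨hA z (by simpa using hz), hB z (by simpa using hz)⟩, hT, ?_⟩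
  rintro ⟨M, hM⟩
  obtain ⟨r, hr1, hr2⟩ := ((hT.eventually_gt_atTop M).and (Ioo_mem_nhdsLT (show (0:ℝ) < 1 by norm_num))).exists
  have := hM r (by simp [abs_of_pos hr2.1, hr2.2])
  linarith
end
end

section
/- Let p ∈ (1, ∞) with conjugate exponent q = p/(p−1), let F : 𝕋 → ℂ be absolutely continuous with Ḟ ∈ L^p(𝕋), and let f = P[F] be its Poisson integral. Then for every z ∈ 𝔻, max(|f_z(z)|, |f_z̄(z)|) ≤ C_p ‖Ḟ‖_{L^p(𝕋)} / (1 − |z|²)^{1/p}, and consequently |f_z(z)| + |f_z̄(z)| ≤ 2 C_p ‖Ḟ‖_{L^p(𝕋)} / (1 − |z|²)^{1/p}, where C_p = (Γ(q−1) / Γ(q/2)²)^{1/q}. -/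
open MeasureTheory Complex Metric Set Filter
open scoped Real Topology ENNReal

noncomputable section

def gc (a : ℝ) (n : ℕ) : ℝ := Real.Gamma (a + n) / (Real.Gamma a * n.factorial)

lemma gc_eq (a : ℝ) (ha : 0 < a) (n : ℕ) : Ring.choose (a + n - 1) n = gc a n := by
  have h1 := Ring.factorial_nsmul_multichoose_eq_ascPochhammer a n
  rw [Polynomial.ascPochhammer_smeval_eq_eval] at h1
  have h2 : Real.Gamma (a + n) = (ascPochhammer ℝ n).eval a * Real.Gamma a := by
    clear h1
    induction n with
    | zero => simp
    | succ n ih =>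
      have : a + ((n + 1 : ℕ) : ℝ) = (a + n) + 1 := by push_cast; ring
      rw [this, Real.Gamma_add_one (by positivity), ih, ascPochhammer_succ_eval]; ring
  have h3 : Ring.choose (a + n - 1) n = Ring.multichoose a n := by
    rw [Ring.choose]; congr 1; ring
  have h4 : (0:ℝ) < n.factorial := by positivity
  have h5 := Real.Gamma_pos_of_pos ha
  rw [h3, gc, h2, ← h1, nsmul_eq_mul]
  field_simp

lemma gc_nonneg (a : ℝ) (ha : 0 < a) (n : ℕ) : 0 ≤ gc a n := by
  have h5 := Real.Gamma_pos_of_pos ha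
  have h6 : 0 < Real.Gamma (a + n) := Real.Gamma_pos_of_pos (by positivity)
  unfold gc; positivity

lemma gc_hasSum (a : ℝ) (ha : 0 < a) (w : ℂ) (hw : ‖w‖ < 1) :
    HasSum (fun n => (gc a n : ℂ) * w ^ n) (1 / (1 - w) ^ (a : ℂ)) := by
  have h := (Complex.one_div_one_sub_cpow_hasFPowerSeriesOnBall_zero (a : ℂ)).hasSum (y := w)
    (by simpa [enorm_eq_nnnorm] using! hw)
  simp only [zero_add, FormalMultilinearSeries.ofScalars_apply_eq] at h
  have e : (fun n => (gc a n : ℂ) * w ^ n) =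
      fun n : ℕ => Ring.choose ((a : ℂ) + n - 1) n • w ^ n := by
    funext n
    rw [← gc_eq a ha, Complex.ofReal_choose]; push_cast; simp
  rw [e]; exact h

lemma gc_hasSum_real (a : ℝ) (ha : 0 < a) (x : ℝ) (hx0 : 0 ≤ x) (hx : x < 1) :
    HasSum (fun n => gc a n * x ^ n) (1 / (1 - x) ^ a) := by
  have h := gc_hasSum a ha (x : ℂ) (by simpa [abs_of_nonneg hx0] using hx)
  have e : (1 / (1 - (x:ℂ)) ^ (a : ℂ)) = ((1 / (1 - x) ^ a : ℝ) : ℂ) := by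
    push_cast
    rw [Complex.ofReal_cpow (by linarith)]; push_cast; rfl
  rw [e] at h
  exact_mod_cast h

lemma gc_sq_le (q : ℝ) (hq : 1 < q) (n : ℕ) :
    gc (q / 2) n ^ 2 ≤ Real.Gamma (q - 1) / Real.Gamma (q / 2) ^ 2 * gc (q - 1) n := by
  have h := Real.Gamma_mul_add_mul_le_rpow_Gamma_mul_rpow_Gamma (s := q - 1 + n) (t := n + 1)
    (a := 1/2) (b := 1/2) (by have : (0:ℝ) ≤ n := by positivity
                              linarith) (by positivity) (by norm_num) (by norm_num) (by norm_num)
  have g1 : 0 < Real.Gamma (q - 1) := Real.Gamma_pos_of_pos (by linarith)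
  have g2 : 0 < Real.Gamma (q / 2) := Real.Gamma_pos_of_pos (by linarith)
  have g3 : 0 < Real.Gamma (q - 1 + n) := Real.Gamma_pos_of_pos (by have : (0:ℝ) ≤ n := by positivity
                                                                    linarith)
  have g4 : 0 < Real.Gamma (q / 2 + n) := Real.Gamma_pos_of_pos (by positivity)
  rw [Real.Gamma_nat_eq_factorial, show 1 / 2 * (q - 1 + (n:ℝ)) + 1 / 2 * (n + 1) = q / 2 + n by ring,
    ← Real.sqrt_eq_rpow, ← Real.sqrt_eq_rpow] at h
  have h4 : (0:ℝ) < n.factorial := by positivity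
  have h' : Real.Gamma (q / 2 + n) ^ 2 ≤ Real.Gamma (q - 1 + n) * n.factorial := by
    calc _ ≤ (√(Real.Gamma (q - 1 + n)) * √(n.factorial : ℝ)) ^ 2 := by gcongr
      _ = _ := by rw [mul_pow, Real.sq_sqrt g3.le, Real.sq_sqrt h4.le]
  unfold gc
  calc _ = Real.Gamma (q / 2 + n) ^ 2 / (Real.Gamma (q / 2) ^ 2 * n.factorial ^ 2) := by
        field_simp
    _ ≤ (Real.Gamma (q - 1 + n) * n.factorial) / (Real.Gamma (q / 2) ^ 2 * n.factorial ^ 2) := by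
        gcongr
    _ = _ := by field_simp

lemma int_exp (k : ℤ) (hk : k ≠ 0) :
    ∫ t in (0:ℝ)..(2 * π), Complex.exp ((k : ℂ) * Complex.I * (t : ℂ)) = 0 := by
  rw [integral_exp_mul_complex (by simp [hk])]
  have : (k : ℂ) * Complex.I * ((2 * π : ℝ) : ℂ) = k * (2 * π * Complex.I) := by push_cast; ring
  rw [this, Complex.exp_int_mul_two_pi_mul_I]; simp

lemma parseval (b : ℕ → ℂ) (hb : Summable (fun n => ‖b n‖)) (σ : ℤ) (hσ : σ ≠ 0) (g : ℝ → ℂ)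
    (hg : ∀ t : ℝ, HasSum (fun n => b n * Complex.exp ((σ : ℂ) * Complex.I * (t : ℂ)) ^ n) (g t)) :
    HasSum (fun n => 2 * π * ‖b n‖ ^ 2) (∫ t in (0:ℝ)..(2 * π), ‖g t‖ ^ 2) := by
  set e : ℝ → ℂ := fun t => Complex.exp ((σ : ℂ) * Complex.I * (t : ℂ)) with he
  have hen : ∀ t, ‖e t‖ = 1 := fun t => by
    have : (σ : ℂ) * Complex.I * (t : ℂ) = ((σ * t : ℝ) : ℂ) * Complex.I := by push_cast; ring
    rw [he]; simp only; rw [this, Complex.norm_exp_ofReal_mul_I]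
  have hec : Continuous e := by fun_prop
  let G : ℕ × ℕ → ℝ → ℂ := fun p t => (b p.1 * e t ^ p.1) * (starRingEnd ℂ) (b p.2 * e t ^ p.2)
  have hGn : ∀ p t, ‖G p t‖ = ‖b p.1‖ * ‖b p.2‖ := fun p t => by
    simp [G, hen]
  have hbb : Summable (fun p : ℕ × ℕ => ‖b p.1‖ * ‖b p.2‖) :=
    hb.mul_of_nonneg hb (fun _ => norm_nonneg _) (fun _ => norm_nonneg _)
  have hlim : ∀ t, HasSum (fun p => G p t) (((‖g t‖ ^ 2 : ℝ)) : ℂ) := fun t => by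
    have h1 := hg t
    have h2 : HasSum (fun n => (starRingEnd ℂ) (b n * e t ^ n)) ((starRingEnd ℂ) (g t)) :=
      (Complex.hasSum_conj').2 (by simpa using h1)
    have h3 := h1.mul h2 (Summable.of_norm (hbb.congr fun p => (hGn p t).symm))
    rw [Complex.mul_conj, Complex.normSq_eq_norm_sq] at h3
    exact h3
  have hI := intervalIntegral.hasSum_integral_of_dominated_convergence (μ := volume) (a := 0)
    (b := 2 * π) (F := G) (f := fun t => ((‖g t‖ ^ 2 : ℝ) : ℂ))
    (fun p _ => ‖b p.1‖ * ‖b p.2‖)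
    (fun p => (by fun_prop : Continuous (G p)).aestronglyMeasurable)
    (fun p => Eventually.of_forall fun t _ => (hGn p t).le)
    (Eventually.of_forall fun t _ => hbb) (by simp)
    (Eventually.of_forall fun t _ => hlim t)
  have hGI : ∀ p : ℕ × ℕ, ∫ t in (0:ℝ)..(2 * π), G p t =
      if p.1 = p.2 then ((2 * π * ‖b p.1‖ ^ 2 : ℝ) : ℂ) else 0 := by
    rintro ⟨m, n⟩
    have h1 : ∀ t : ℝ, G (m, n) t = b m * (starRingEnd ℂ) (b n) *
        Complex.exp (((σ * ((m : ℤ) - n) : ℤ) : ℂ) * Complex.I * (t : ℂ)) := fun t => by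
      simp only [G, he, map_mul, ← Complex.exp_conj, ← Complex.exp_nat_mul]
      have : ∀ A B C D : ℂ, A * B * (C * D) = A * C * (B * D) := fun _ _ _ _ => by ring
      rw [this, ← Complex.exp_add]
      congr 2
      simp
      ring
    simp only [h1]
    rw [intervalIntegral.integral_const_mul]
    split_ifs with h
    · have h : m = n := h
      subst h
      simp [Complex.mul_conj, Complex.normSq_eq_norm_sq]; ring
    · rw [int_exp, mul_zero]
      have h : m ≠ n := h
      have : (m : ℤ) - n ≠ 0 := by omega
      exact mul_ne_zero hσ this
  simp only [hGI] at hI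
  have hinj : Function.Injective (fun n : ℕ => (n, n)) := fun a b h => by simpa using h
  rw [← hinj.hasSum_iff] at hI
  · simp only [Function.comp_def, if_true] at hI
    rw [intervalIntegral.integral_ofReal] at hI
    exact_mod_cast hI
  · rintro ⟨m, n⟩ h
    have : m ≠ n := fun hh => h ⟨m, by simp [hh]⟩
    simp [this]

lemma kernel_bound (q : ℝ) (hq : 1 < q) (w : ℂ) (hw : ‖w‖ < 1) (σ : ℤ) (hσ : σ ≠ 0) :
    ∫ t in (0:ℝ)..(2 * π), (1 / ‖1 - w * Complex.exp ((σ : ℂ) * Complex.I * (t : ℂ))‖) ^ q ≤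
      2 * π * (Real.Gamma (q - 1) / Real.Gamma (q / 2) ^ 2 * (1 / (1 - ‖w‖ ^ 2) ^ (q - 1))) := by
  set e : ℝ → ℂ := fun t => Complex.exp ((σ : ℂ) * Complex.I * (t : ℂ)) with he
  have hen : ∀ t, ‖e t‖ = 1 := fun t => by
    have : (σ : ℂ) * Complex.I * (t : ℂ) = ((σ * t : ℝ) : ℂ) * Complex.I := by push_cast; ring
    rw [he]; simp only; rw [this, Complex.norm_exp_ofReal_mul_I]
  have ha : 0 < q / 2 := by linarith
  have hP := parseval (fun n => (gc (q/2) n : ℂ) * w ^ n) ?_ σ hσ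
    (fun t => 1 / (1 - w * e t) ^ ((q / 2 : ℝ) : ℂ)) ?_
  · have hQ := (gc_hasSum_real (q - 1) (by linarith) (‖w‖ ^ 2) (by positivity)
      (by nlinarith [norm_nonneg w])).mul_left
        (2 * π * (Real.Gamma (q - 1) / Real.Gamma (q / 2) ^ 2))
    have hle := hasSum_le (fun n => ?_) hP hQ
    · refine (le_of_eq ?_).trans (hle.trans (le_of_eq (by ring)))
      congr 1
      ext t
      have hne : 1 - w * e t ≠ 0 := by
        intro h
        have : ‖w * e t‖ = 1 := by rw [← sub_eq_zero.1 h]; simp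
        rw [norm_mul, hen] at this; linarith
      rw [norm_div, norm_one, Complex.norm_cpow_of_ne_zero hne]
      simp only [Complex.ofReal_re, Complex.ofReal_im, mul_zero, Real.exp_zero, div_one, one_div]
      rw [Real.inv_rpow (norm_nonneg _), inv_pow, ← Real.rpow_mul_natCast (norm_nonneg _)]
      congr 2; push_cast; ring
    · have := gc_sq_le q hq n
      simp only [norm_mul, Complex.norm_real, norm_pow, mul_pow, Real.norm_eq_abs, sq_abs]
      have h0 : 0 ≤ (‖w‖ ^ 2) ^ n := by positivity
      calc _ = 2 * π * (gc (q/2) n ^ 2 * (‖w‖ ^ 2) ^ n) := by ring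
        _ ≤ 2 * π * ((Real.Gamma (q - 1) / Real.Gamma (q / 2) ^ 2 * gc (q - 1) n) * (‖w‖ ^ 2) ^ n) := by
            gcongr
        _ = _ := by ring
  · have := (gc_hasSum_real (q/2) ha ‖w‖ (norm_nonneg _) hw).summable
    refine this.congr fun n => ?_
    simp [abs_of_nonneg (gc_nonneg _ ha n)]
  · intro t
    have := gc_hasSum (q/2) ha (w * e t) (by simpa [hen] using hw)
    simp only [mul_pow, ← mul_assoc] at this
    exact this

lemma parts (T : ℝ) (hT : 0 ≤ T) (φ g g' : ℝ → ℂ) (hφ : IntervalIntegrable φ volume 0 T)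
    (hφ0 : ∫ s in (0:ℝ)..T, φ s = 0) (hg : ∀ t, HasDerivAt g (g' t) t) (hg' : Continuous g')
    (hgT : g T = g 0) (c : ℂ) :
    ∫ t in (0:ℝ)..T, (c + ∫ s in (0:ℝ)..t, φ s) * g' t = - ∫ t in (0:ℝ)..T, φ t * g t := by
  have hgc : Continuous g := continuous_iff_continuousAt.2 fun t => (hg t).continuousAt
  have hFTC : ∀ a b : ℝ, ∫ t in a..b, g' t = g b - g a := fun a b =>
    intervalIntegral.integral_eq_sub_of_hasDerivAt (fun t _ => hg t) (hg'.intervalIntegrable _ _)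
  let K : ℝ → ℝ → ℂ := fun t s => if s ≤ t then φ s * g' t else 0
  have hswap : ∫ t in (0:ℝ)..T, ∫ s in (0:ℝ)..T, K t s = ∫ s in (0:ℝ)..T, ∫ t in (0:ℝ)..T, K t s := by
    apply MeasureTheory.intervalIntegral_intervalIntegral_swap
    rw [uIoc_of_le hT]
    have h1 : Integrable φ (volume.restrict (Ioc 0 T)) := by
      rw [intervalIntegrable_iff, uIoc_of_le hT] at hφ; exact hφ
    have h2 : Integrable g' (volume.restrict (Ioc 0 T)) := by
      have := hg'.intervalIntegrable (μ := volume) 0 T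
      rw [intervalIntegrable_iff, uIoc_of_le hT] at this; exact this
    have h3 := (h2.mul_prod h1).indicator (s := {p : ℝ × ℝ | p.2 ≤ p.1})
      (measurableSet_le measurable_snd measurable_fst)
    rw [Measure.prod_restrict] at h3
    rw [Measure.volume_eq_prod]
    refine h3.congr (Eventually.of_forall ?_)
    rintro ⟨t, s⟩
    simp [K, Function.uncurry, Set.indicator, mul_comm]
  have hL : ∀ t ∈ Ioc 0 T, ∫ s in (0:ℝ)..T, K t s = (∫ s in (0:ℝ)..t, φ s) * g' t := by
    intro t ht
    rw [intervalIntegral.integral_of_le hT, intervalIntegral.integral_of_le ht.1.le,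
      ← integral_mul_const]
    have : (fun s => K t s) = (Iic t).indicator (fun s => φ s * g' t) := by
      funext s; simp [K, Set.indicator]
    rw [this, setIntegral_indicator measurableSet_Iic]
    congr 2
    ext s; simp only [mem_inter_iff, mem_Ioc, mem_Iic]
    have := ht.2
    constructor
    · rintro ⟨⟨a, b⟩, c⟩; exact ⟨a, c⟩
    · rintro ⟨a, b⟩; exact ⟨⟨a, by linarith⟩, b⟩
  have hR : ∀ s ∈ Ioc 0 T, ∫ t in (0:ℝ)..T, K t s = φ s * (g T - g s) := by
    intro s hs
    rw [← hFTC, intervalIntegral.integral_of_le hT, intervalIntegral.integral_of_le hs.2,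
      ← integral_const_mul]
    have : (fun t => K t s) = (Ici s).indicator (fun t => φ s * g' t) := by
      funext t; simp [K, Set.indicator]
    rw [this, setIntegral_indicator measurableSet_Ici, ← integral_Icc_eq_integral_Ioc]
    congr 2
    ext t; simp only [mem_inter_iff, mem_Ioc, mem_Icc, mem_Ici]
    have := hs.1
    constructor
    · rintro ⟨⟨a, b⟩, c⟩; exact ⟨c, b⟩
    · rintro ⟨a, b⟩; exact ⟨⟨by linarith, b⟩, a⟩
  have hL' : ∫ t in (0:ℝ)..T, ∫ s in (0:ℝ)..T, K t s =
      ∫ t in (0:ℝ)..T, (∫ s in (0:ℝ)..t, φ s) * g' t := by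
    apply intervalIntegral.integral_congr_ae
    rw [uIoc_of_le hT]
    exact Eventually.of_forall hL
  have hR' : ∫ s in (0:ℝ)..T, ∫ t in (0:ℝ)..T, K t s =
      ∫ s in (0:ℝ)..T, φ s * (g T - g s) := by
    apply intervalIntegral.integral_congr_ae
    rw [uIoc_of_le hT]
    exact Eventually.of_forall hR
  have hΦ : ContinuousOn (fun t => ∫ s in (0:ℝ)..t, φ s) (uIcc 0 T) :=
    intervalIntegral.continuousOn_primitive_interval'  hφ left_mem_uIcc
  have i1 : IntervalIntegrable (fun t => c * g' t) volume 0 T :=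
    (continuous_const.mul hg').intervalIntegrable _ _
  have i2 : IntervalIntegrable (fun t => (∫ s in (0:ℝ)..t, φ s) * g' t) volume 0 T :=
    (hΦ.mul hg'.continuousOn).intervalIntegrable
  simp only [add_mul]
  rw [intervalIntegral.integral_add i1 i2, intervalIntegral.integral_const_mul, hFTC, hgT, sub_self,
    mul_zero, zero_add, ← hL', hswap, hR']
  simp only [mul_sub]
  rw [intervalIntegral.integral_sub (hφ.mul_const _) (hφ.mul_continuousOn hgc.continuousOn),
    intervalIntegral.integral_mul_const, hφ0]
  simp

def eE (σ : ℤ) (t : ℝ) : ℂ := Complex.exp ((σ : ℂ) * Complex.I * (t : ℂ))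

lemma eE_norm (σ : ℤ) (t : ℝ) : ‖eE σ t‖ = 1 := by
  have : (σ : ℂ) * Complex.I * (t : ℂ) = ((σ * t : ℝ) : ℂ) * Complex.I := by push_cast; ring
  rw [eE, this, Complex.norm_exp_ofReal_mul_I]

lemma eE_cont (σ : ℤ) : Continuous (eE σ) := by unfold eE; fun_prop

lemma eE_lower (σ : ℤ) (t : ℝ) (w : ℂ) : 1 - ‖w‖ ≤ ‖1 - w * eE σ t‖ := by
  have := norm_sub_norm_le (1:ℂ) (w * eE σ t)
  simpa [eE_norm] using this

lemma eE_ne (σ : ℤ) (t : ℝ) (w : ℂ) (hw : ‖w‖ < 1) : 1 - w * eE σ t ≠ 0 := by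
  have := eE_lower σ t w
  exact norm_pos_iff.1 (by linarith)

lemma H_deriv (σ : ℤ) (Φ : ℝ → ℂ) (hΦ : Continuous Φ) (w : ℂ) (hw : ‖w‖ < 1) :
    HasDerivAt (fun w => ∫ t in (0:ℝ)..(2 * π), Φ t * (1 / (1 - w * eE σ t)))
      (∫ t in (0:ℝ)..(2 * π), Φ t * (eE σ t / (1 - w * eE σ t) ^ 2)) w := by
  have hE := eE_cont σ
  set ρ := (1 + ‖w‖) / 2 with hρ
  have hball : ∀ x ∈ ball w ((1 - ‖w‖) / 2), ‖x‖ ≤ ρ := fun x hx => by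
    have h1 : ‖x - w‖ < (1 - ‖w‖) / 2 := by simpa [dist_eq_norm] using hx
    have h2 := norm_le_norm_add_norm_sub' x w
    rw [hρ]; linarith
  have hρ1 : 0 < 1 - ρ := by rw [hρ]; linarith
  have hlt : ∀ x ∈ ball w ((1 - ‖w‖) / 2), ‖x‖ < 1 := fun x hx => by
    have := hball x hx; linarith
  have hnb : ball w ((1 - ‖w‖) / 2) ∈ 𝓝 w := ball_mem_nhds _ (by linarith)
  have hc : ∀ x : ℂ, ‖x‖ < 1 → Continuous (fun t => Φ t * (1 / (1 - x * eE σ t))) := fun x hx =>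
    hΦ.mul (continuous_const.div (by fun_prop) (fun t => eE_ne σ t x hx))
  refine (intervalIntegral.hasDerivAt_integral_of_dominated_loc_of_deriv_le (μ := volume)
    (F := fun w t => Φ t * (1 / (1 - w * eE σ t)))
    (F' := fun w t => Φ t * (eE σ t / (1 - w * eE σ t) ^ 2))
    (bound := fun t => ‖Φ t‖ * (1 / (1 - ρ) ^ 2)) hnb ?_ ?_ ?_ ?_ ?_ ?_).2
  · filter_upwards [hnb] with x hx
    exact (hc x (hlt x hx)).aestronglyMeasurable
  · exact (hc w hw).intervalIntegrable _ _
  · exact (hΦ.mul (hE.div (by fun_prop) (fun t => pow_ne_zero 2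
      (eE_ne σ t w hw)))).aestronglyMeasurable
  · refine Eventually.of_forall fun t _ x hx => ?_
    rw [norm_mul, norm_div, norm_pow, eE_norm]
    have := eE_lower σ t x
    have := hball x hx
    gcongr
    linarith
  · exact (hΦ.norm.mul continuous_const).intervalIntegrable _ _
  · refine Eventually.of_forall fun t _ x hx => ?_
    have hne := eE_ne σ t x (hlt x hx)
    have h1 : HasDerivAt (fun x : ℂ => 1 - x * eE σ t) (-(eE σ t)) x := by
      simpa using ((hasDerivAt_id x).mul_const (eE σ t)).const_sub 1
    have h2 := (h1.inv hne).const_mul (Φ t)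
    simpa [one_div] using h2

lemma D_eq (σ : ℤ) (hσ : σ ≠ 0) (φ : ℝ → ℂ) (hφ : IntervalIntegrable φ volume 0 (2 * π))
    (hφ0 : ∫ s in (0:ℝ)..(2 * π), φ s = 0) (c w : ℂ) (hw : ‖w‖ < 1) :
    ∫ t in (0:ℝ)..(2 * π), (c + ∫ s in (0:ℝ)..t, φ s) * (eE σ t / (1 - w * eE σ t) ^ 2) =
     - ∫ t in (0:ℝ)..(2 * π), φ t * ((1 / ((σ:ℂ) * I)) * (eE σ t / (1 - w * eE σ t))) := by
  have hE := eE_cont σ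
  have hσ' : (σ : ℂ) ≠ 0 := by exact_mod_cast hσ
  refine parts (2 * π) (by positivity) φ _ _ hφ hφ0 ?_ ?_ ?_ c
  · intro t
    have hne := eE_ne σ t w hw
    have h0 : HasDerivAt (eE σ) (eE σ t * ((σ : ℂ) * I)) t := by
      have := ((Complex.ofRealCLM.hasDerivAt (x := t)).const_mul ((σ : ℂ) * I)).cexp
      simp only [Complex.ofRealCLM_apply, Complex.ofReal_one, mul_one] at this
      exact this
    have h1 : HasDerivAt (fun t => 1 - w * eE σ t) (-(w * (eE σ t * ((σ : ℂ) * I)))) t :=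
      (h0.const_mul w).const_sub 1
    refine ((h0.div h1 hne).const_mul (1 / ((σ : ℂ) * I))).congr_deriv ?_
    have := Complex.I_ne_zero
    field_simp
    ring
  · exact hE.div (by fun_prop) (fun t => pow_ne_zero 2 (eE_ne σ t w hw))
  · have : eE σ (2 * π) = eE σ 0 := by
      have h : (σ : ℂ) * I * ((2 * π : ℝ) : ℂ) = σ * (2 * π * I) := by push_cast; ring
      rw [eE, eE, h, Complex.exp_int_mul_two_pi_mul_I]; simp
    simp only [this]

lemma D_bound (p q : ℝ) (hp : 1 < p) (hq : q = p / (p - 1)) (σ : ℤ) (hσ : σ = 1 ∨ σ = -1)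
    (φ : ℝ → ℂ) (hLp : MemLpT (ENNReal.ofReal p) φ) (w : ℂ) (hw : ‖w‖ < 1) :
    ‖(1 / (2 * π) : ℂ) *
      (- ∫ t in (0:ℝ)..(2 * π), φ t * ((1 / ((σ:ℂ) * I)) * (eE σ t / (1 - w * eE σ t))))‖ ≤
      (Real.Gamma (q - 1) / Real.Gamma (q / 2) ^ 2) ^ (1 / q) * lpNormT p φ /
              (1 - ‖w‖ ^ 2) ^ (1 / p) := by
  have hE := eE_cont σ
  have hpq : p.HolderConjugate q := by
    rw [hq]; exact Real.HolderConjugate.conjExponent hp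
  have hq1 : 1 < q := hpq.symm.lt
  have hT : (0:ℝ) ≤ 2 * π := by positivity
  have hσn : ‖(σ : ℂ)‖ = 1 := by rcases hσ with h | h <;> simp [h]
  have hσ0 : σ ≠ 0 := by rcases hσ with h | h <;> simp [h]
  have hk := kernel_bound q hq1 w hw σ hσ0
  change ∫ t in (0:ℝ)..(2 * π), (1 / ‖1 - w * eE σ t‖) ^ q ≤ _ at hk
  set Y := ∫ t in (0:ℝ)..(2 * π), (1 / ‖1 - w * eE σ t‖) ^ q with hY
  set X := ∫ t in (0:ℝ)..(2 * π), ‖φ t‖ ^ p with hX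
  have hX0 : 0 ≤ X := intervalIntegral.integral_nonneg hT fun t _ => by positivity
  have hY0 : 0 ≤ Y := intervalIntegral.integral_nonneg hT fun t _ => by positivity
  have hgc : Continuous (fun t => 1 / ‖1 - w * eE σ t‖) :=
    continuous_const.div (by fun_prop) (fun t => norm_ne_zero_iff.2 (eE_ne σ t w hw))
  have hH : ∫ t in (0:ℝ)..(2 * π), ‖φ t‖ * (1 / ‖1 - w * eE σ t‖) ≤ X ^ (1 / p) * Y ^ (1 / q) := by
    rw [hX, hY]
    simp only [intervalIntegral.integral_of_le hT]
    refine integral_mul_le_Lp_mul_Lq_of_nonneg hpq (Eventually.of_forall fun t => norm_nonneg _)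
      (Eventually.of_forall fun t => by simp only [Pi.zero_apply]; positivity) hLp.norm ?_
    refine MemLp.of_bound (C := 1 / (1 - ‖w‖)) hgc.aestronglyMeasurable
      (Eventually.of_forall fun t => ?_)
    have := eE_lower σ t w
    rw [norm_div, norm_norm, norm_one]
    gcongr
  have hN : ‖∫ t in (0:ℝ)..(2 * π), φ t * ((1 / ((σ:ℂ) * I)) * (eE σ t / (1 - w * eE σ t)))‖ ≤
      ∫ t in (0:ℝ)..(2 * π), ‖φ t‖ * (1 / ‖1 - w * eE σ t‖) := by
    refine (intervalIntegral.norm_integral_le_integral_norm hT).trans (le_of_eq ?_)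
    congr 1; ext t
    simp only [norm_mul, norm_div, hσn, eE_norm, norm_I, norm_one]
    ring
  set r := 1 - ‖w‖ ^ 2 with hr
  have hr0 : 0 < r := by rw [hr]; nlinarith [norm_nonneg w]
  set C := Real.Gamma (q - 1) / Real.Gamma (q / 2) ^ 2 with hC
  have hC0 : 0 ≤ C := by
    have g1 : 0 < Real.Gamma (q - 1) := Real.Gamma_pos_of_pos (by linarith)
    positivity
  have hp0 : 0 < p := by linarith
  have hq0 : 0 < q := by linarith
  have hsum : 1 / p + 1 / q = 1 := by simpa using hpq.inv_add_inv_eq_one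
  have hY' : Y ^ (1 / q) ≤ (2 * π) ^ (1 / q) * (C ^ (1 / q) * (1 / r ^ (1 / p))) := by
    refine (Real.rpow_le_rpow hY0 hk (by positivity)).trans (le_of_eq ?_)
    rw [Real.mul_rpow hT (by positivity), Real.mul_rpow hC0 (by positivity),
      Real.div_rpow zero_le_one (by positivity), Real.one_rpow, ← Real.rpow_mul hr0.le]
    have : (q - 1) * (1 / q) = 1 / p := by
      have : 1 / p = 1 - 1 / q := by linarith
      rw [this]; field_simp
    rw [this]
  have hl : lpNormT p φ = (1 / (2 * π)) ^ (1 / p) * X ^ (1 / p) := by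
    rw [lpNormT, Real.mul_rpow (by positivity) hX0]
  have hX' : X ^ (1 / p) = (2 * π) ^ (1 / p) * lpNormT p φ := by
    rw [hl, ← mul_assoc, ← Real.mul_rpow (by positivity) (by positivity)]
    rw [mul_one_div_cancel (by positivity), Real.one_rpow, one_mul]
  have hl0 : 0 ≤ lpNormT p φ := by rw [hl]; positivity
  have h2 : (2 * π) ^ (1 / p) * (2 * π) ^ (1 / q) = 2 * π := by
    rw [← Real.rpow_add (by positivity), hsum, Real.rpow_one]
  rw [norm_mul, norm_neg]
  have h3 : ‖(1 / (2 * π) : ℂ)‖ = 1 / (2 * π) := by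
    simp [abs_of_pos Real.pi_pos]
  rw [h3]
  calc _ ≤ 1 / (2 * π) * (X ^ (1 / p) * Y ^ (1 / q)) := by
        gcongr; exact hN.trans hH
    _ ≤ 1 / (2 * π) * (((2 * π) ^ (1 / p) * lpNormT p φ) *
          ((2 * π) ^ (1 / q) * (C ^ (1 / q) * (1 / r ^ (1 / p))))) := by
        rw [hX']; gcongr
    _ = 1 / (2 * π) * ((2 * π) ^ (1 / p) * (2 * π) ^ (1 / q)) *
          (C ^ (1 / q) * lpNormT p φ / r ^ (1 / p)) := by ring
    _ = _ := by rw [h2, one_div_mul_cancel (by positivity), one_mul]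

lemma poissonKer_eq (ζ : ℂ) (h : ‖ζ‖ < 1) :
    (poissonKer ζ : ℂ) = 1 / (1 - ζ) + 1 / (1 - (starRingEnd ℂ) ζ) - 1 := by
  have h1 : 1 - ζ ≠ 0 := fun h0 => by
    rw [← sub_eq_zero.1 h0] at h; simp at h
  have h2 : 1 - (starRingEnd ℂ) ζ ≠ 0 := fun h0 => by
    apply h1
    have := congrArg (starRingEnd ℂ) h0
    simpa using this
  have h3 : ((‖ζ‖ : ℂ)) ^ 2 = ζ * (starRingEnd ℂ) ζ := (Complex.mul_conj' ζ).symm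
  have h4 : ((‖1 - ζ‖ : ℂ)) ^ 2 = (1 - ζ) * (1 - (starRingEnd ℂ) ζ) := by
    rw [← Complex.mul_conj']; simp
  unfold poissonKer
  push_cast
  rw [h3, h4]
  field_simp
  ring

lemma main_eq (F : ℂ → ℂ) (Fd : ℝ → ℂ) (hF : IsACDeriv F Fd) (z : ℂ) (hz : ‖z‖ < 1) :
    wdz (poissonInt F) z = (1 / (2 * π) : ℂ) * (- ∫ t in (0:ℝ)..(2 * π),
      Fd t * ((1 / (((-1 : ℤ):ℂ) * I)) * (eE (-1) t / (1 - z * eE (-1) t)))) ∧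
    wdzb (poissonInt F) z = (1 / (2 * π) : ℂ) * (- ∫ t in (0:ℝ)..(2 * π),
      Fd t * ((1 / (((1 : ℤ):ℂ) * I)) * (eE 1 t / (1 - (starRingEnd ℂ) z * eE 1 t)))) := by
  obtain ⟨hint, -, hAC⟩ := hF
  set Φ : ℝ → ℂ := fun t => F 1 + ∫ s in (0:ℝ)..t, Fd s with hΦdef
  have hΦ : Continuous Φ := continuous_const.add (intervalIntegral.continuous_primitive hint 0)
  have h0 : ∫ s in (0:ℝ)..(2 * π), Fd s = 0 := by
    have := hAC (2 * π)
    rw [show ((2 * π : ℝ) : ℂ) * I = 2 * π * I by push_cast; ring, Complex.exp_two_pi_mul_I] at this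
    simpa using this
  have hcz : ‖(starRingEnd ℂ) z‖ < 1 := by simpa using hz
  have d1 := H_deriv (-1) Φ hΦ z hz
  have d2 := H_deriv 1 Φ hΦ ((starRingEnd ℂ) z) hcz
  rw [D_eq (-1) (by norm_num) Fd (hint _ _) h0 (F 1) z hz] at d1
  rw [D_eq 1 (by norm_num) Fd (hint _ _) h0 (F 1) _ hcz] at d2
  set a := - ∫ t in (0:ℝ)..(2 * π),
      Fd t * ((1 / (((-1 : ℤ):ℂ) * I)) * (eE (-1) t / (1 - z * eE (-1) t)))
  set b := - ∫ t in (0:ℝ)..(2 * π),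
      Fd t * ((1 / (((1 : ℤ):ℂ) * I)) * (eE 1 t / (1 - (starRingEnd ℂ) z * eE 1 t)))
  have hic : ∀ (σ : ℤ) (x : ℂ), ‖x‖ < 1 →
      IntervalIntegrable (fun t => Φ t * (1 / (1 - x * eE σ t))) volume 0 (2 * π) := fun σ x hx =>
    (hΦ.mul (continuous_const.div (by have := eE_cont σ; fun_prop)
      (fun t => eE_ne σ t x hx))).intervalIntegrable _ _
  have heq : ∀ x : ℂ, ‖x‖ < 1 → poissonInt F x = (1 / (2 * π) : ℂ) *
      ((∫ t in (0:ℝ)..(2 * π), Φ t * (1 / (1 - x * eE (-1) t))) +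
       (∫ t in (0:ℝ)..(2 * π), Φ t * (1 / (1 - (starRingEnd ℂ) x * eE 1 t))) -
       ∫ t in (0:ℝ)..(2 * π), Φ t) := by
    intro x hx
    have hcx : ‖(starRingEnd ℂ) x‖ < 1 := by simpa using hx
    rw [← intervalIntegral.integral_add (hic _ _ hx) (hic _ _ hcx),
      ← intervalIntegral.integral_sub ((hic _ _ hx).add (hic _ _ hcx)) (hΦ.intervalIntegrable _ _)]
    unfold poissonInt
    congr 2
    ext t
    have e1 : Complex.exp (-(t : ℂ) * I) = eE (-1) t := by
      unfold eE; congr 1; push_cast; ring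
    have e2 : (starRingEnd ℂ) (eE (-1) t) = eE 1 t := by
      unfold eE; rw [← Complex.exp_conj]; congr 1; simp
    rw [e1, poissonKer_eq _ (by simpa [eE_norm] using hx), hAC t, map_mul, e2]
    simp only [hΦdef]
    ring
  have d2' : HasFDerivAt (fun x : ℂ => ∫ t in (0:ℝ)..(2 * π),
      Φ t * (1 / (1 - (starRingEnd ℂ) x * eE 1 t))) _ z :=
    (d2.hasFDerivAt.restrictScalars ℝ).comp z
      (Complex.conjCLE.toContinuousLinearMap.hasFDerivAt (x := z))
  have d := (((d1.hasFDerivAt.restrictScalars ℝ).add d2').sub_const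
    (∫ t in (0:ℝ)..(2 * π), Φ t)).const_mul (1 / (2 * π) : ℂ)
  have d' := d.congr_of_eventuallyEq (f₁ := poissonInt F) (by
    filter_upwards [ball_mem_nhds z (by linarith : 0 < 1 - ‖z‖)] with x hx
    have h1 : ‖x - z‖ < 1 - ‖z‖ := by simpa [dist_eq_norm] using hx
    have h2 := norm_le_norm_add_norm_sub' x z
    exact heq x (by linarith))
  unfold wdz wdzb
  rw [d'.fderiv]
  simp
  constructor
  · ring_nf
    simp only [Complex.I_sq]; ring
  · ring_nf
    simp only [Complex.I_sq]; ring

/-- For `p ∈ (1,∞)` with conjugate exponent `q = p/(p-1)`, `F : 𝕋 → ℂ`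
absolutely continuous with `Ḟ ∈ L^p(𝕋)` and `f = P[F]`, for every `z ∈ 𝔻`,
`max(|f_z(z)|, |f_z̄(z)|) ≤ C_p ‖Ḟ‖_p / (1-|z|²)^{1/p}` and
`|f_z(z)| + |f_z̄(z)| ≤ 2 C_p ‖Ḟ‖_p / (1-|z|²)^{1/p}`, where
`C_p = (Γ(q-1)/Γ(q/2)²)^{1/q}`. -/
theorem stmt16 (p q : ℝ) (hp : 1 < p) (hq : q = p / (p - 1)) (F : ℂ → ℂ) (Fd : ℝ → ℂ)
    (hF : IsACDeriv F Fd) (hLp : MemLpT (ENNReal.ofReal p) Fd) :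
    ∀ z ∈ ball (0:ℂ) 1,
      (max ‖wdz (poissonInt F) z‖ ‖wdzb (poissonInt F) z‖
          ≤ (Real.Gamma (q - 1) / Real.Gamma (q / 2) ^ 2) ^ (1 / q) * lpNormT p Fd /
              (1 - ‖z‖ ^ 2) ^ (1 / p)) ∧
      (‖wdz (poissonInt F) z‖ + ‖wdzb (poissonInt F) z‖
          ≤ 2 * (Real.Gamma (q - 1) / Real.Gamma (q / 2) ^ 2) ^ (1 / q) * lpNormT p Fd /
              (1 - ‖z‖ ^ 2) ^ (1 / p)) := by
  intro z hz
  have hz' : ‖z‖ < 1 := by simpa using hz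
  obtain ⟨e1, e2⟩ := main_eq F Fd hF z hz'
  have b1 := D_bound p q hp hq (-1) (Or.inr rfl) Fd hLp z hz'
  have b2 := D_bound p q hp hq 1 (Or.inl rfl) Fd hLp ((starRingEnd ℂ) z) (by simpa using hz')
  rw [← e1] at b1
  rw [← e2, Complex.norm_conj] at b2
  refine ⟨max_le b1 b2, (add_le_add b1 b2).trans (le_of_eq ?_)⟩
  ring

end
end

section
/- For every a > 0 and every z ∈ 𝔻, (1/(2π)) ∫₀^{2π} dt / |1 − z e^{−it}|^{a+1} ≤ (Γ(a) / Γ((a+1)/2)²) · (1 − |z|²)^{−a}. -/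
open MeasureTheory Complex Metric Set Filter
open scoped Real Topology ENNReal

noncomputable section

lemma mc_eq (s : ℝ) (hs : 0 < s) (n : ℕ) :
    Ring.choose (s + n - 1) n = Real.Gamma (s + n) / (Real.Gamma s * n.factorial) := by
  rw [← Ring.multichoose_eq]
  have h := Ring.factorial_nsmul_multichoose_eq_ascPochhammer s n
  rw [Polynomial.ascPochhammer_smeval_eq_eval, nsmul_eq_mul] at h
  have h2 : Real.Gamma (s + n) = Real.Gamma s * (ascPochhammer ℝ n).eval s := by
    clear h
    induction n with
    | zero => simp
    | succ n ih =>
      rw [ascPochhammer_succ_eval, ← mul_assoc, ← ih]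
      push_cast
      rw [← add_assoc, Real.Gamma_add_one (by positivity)]
      ring
  have h3 := (Real.Gamma_pos_of_pos hs).ne'
  have h4 : (n.factorial : ℝ) ≠ 0 := by positivity
  rw [h2, ← h]
  field_simp

lemma coef_le (a : ℝ) (ha : 0 < a) (n : ℕ) :
    (Ring.choose ((a + 1) / 2 + n - 1) n : ℝ) ^ 2 ≤
      Real.Gamma a / Real.Gamma ((a + 1) / 2) ^ 2 * Ring.choose (a + n - 1) n := by
  have hl : 0 < (a + 1) / 2 := by positivity
  rw [mc_eq _ hl, mc_eq _ ha]
  have h := Real.Gamma_mul_add_mul_le_rpow_Gamma_mul_rpow_Gamma (s := a + n) (t := n + 1)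
    (a := 1 / 2) (b := 1 / 2) (by positivity) (by positivity) (by norm_num) (by norm_num)
    (by norm_num)
  have p1 : 0 < Real.Gamma (a + n) := Real.Gamma_pos_of_pos (by positivity)
  have p2 : 0 < Real.Gamma ((n : ℝ) + 1) := Real.Gamma_pos_of_pos (by positivity)
  have p3 := Real.Gamma_pos_of_pos hl
  have p4 := Real.Gamma_pos_of_pos ha
  have p5 : 0 < Real.Gamma ((a + 1) / 2 + n) := Real.Gamma_pos_of_pos (by positivity)
  rw [show 1 / 2 * (a + n) + 1 / 2 * ((n : ℝ) + 1) = (a + 1) / 2 + n by ring,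
    ← Real.sqrt_eq_rpow, ← Real.sqrt_eq_rpow] at h
  have h2 : Real.Gamma ((a + 1) / 2 + n) ^ 2 ≤ Real.Gamma (a + n) * Real.Gamma ((n : ℝ) + 1) := by
    calc _ ≤ (√(Real.Gamma (a + n)) * √(Real.Gamma ((n : ℝ) + 1))) ^ 2 := by gcongr
      _ = _ := by rw [mul_pow, Real.sq_sqrt p1.le, Real.sq_sqrt p2.le]
  rw [Real.Gamma_nat_eq_factorial] at h2
  have h4 : (0 : ℝ) < (n.factorial : ℝ) := by positivity
  rw [div_pow, mul_pow]
  calc _ ≤ (Real.Gamma (a + n) * n.factorial) /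
        (Real.Gamma ((a + 1) / 2) ^ 2 * (n.factorial : ℝ) ^ 2) := by gcongr
    _ = _ := by field_simp

lemma real_series (s : ℝ) {x : ℝ} (hx : |x| < 1) :
    HasSum (fun n : ℕ => Ring.choose (s + n - 1) n * x ^ n) (1 / (1 - x) ^ s) := by
  have h := (Real.one_div_one_sub_rpow_hasFPowerSeriesOnBall_zero s).hasSum (y := x)
    (by rw [Metric.mem_eball, edist_eq_enorm_sub, sub_zero, ← ofReal_norm, ENNReal.ofReal_lt_one]; exact hx)
  simpa [mul_comm, FormalMultilinearSeries.ofScalars_apply_eq] using h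

lemma cplx_series (s : ℝ) {x : ℂ} (hx : ‖x‖ < 1) :
    HasSum (fun n : ℕ => ((Ring.choose (s + n - 1) n : ℝ) : ℂ) * x ^ n)
      (1 / (1 - x) ^ (s : ℂ)) := by
  have h := (Complex.one_div_one_sub_cpow_hasFPowerSeriesOnBall_zero s).hasSum (y := x)
    (by rw [Metric.mem_eball, edist_eq_enorm_sub, sub_zero, ← ofReal_norm, ENNReal.ofReal_lt_one]; exact hx)
  simpa [mul_comm, FormalMultilinearSeries.ofScalars_apply_eq, Complex.ofReal_choose] using h

lemma parseval_fin (c : ℕ → ℂ) (N : ℕ) :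
    (1 / (2 * π)) * ∫ t in (0:ℝ)..(2 * π),
      ‖∑ n ∈ Finset.range N, c n * Complex.exp ((t : ℂ) * Complex.I) ^ n‖ ^ 2
      = ∑ n ∈ Finset.range N, ‖c n‖ ^ 2 := by
  set p : Polynomial ℂ := ∑ n ∈ Finset.range N, Polynomial.monomial n (c n) with hp
  have hc : ∀ n, p.coeff n = if n < N then c n else 0 := by
    intro n
    simp [hp, Polynomial.finset_sum_coeff, Polynomial.coeff_monomial]
  have h := p.sum_sq_norm_coeff_eq_circleAverage
  rw [Real.circleAverage_def] at h
  have h1 : ∑ i ∈ p.support, ‖p.coeff i‖ ^ 2 = ∑ n ∈ Finset.range N, ‖c n‖ ^ 2 := by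
    rw [Finset.sum_subset (s₂ := Finset.range N)]
    · apply Finset.sum_congr rfl
      intro n hn
      rw [hc, if_pos (Finset.mem_range.1 hn)]
    · intro n hn
      rw [Polynomial.mem_support_iff, hc] at hn
      by_contra h'
      exact hn (if_neg (by simpa using h'))
    · intro n _ hn
      rw [Polynomial.notMem_support_iff.1 hn]; simp
  rw [← h1, h]
  simp [hp, Polynomial.eval_finset_sum, circleMap]

lemma main_bound (a : ℝ) (ha : 0 < a) (w : ℂ) (hw : ‖w‖ < 1) :
    (1 / (2 * π)) * ∫ t in (0:ℝ)..(2 * π),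
        1 / ‖1 - w * Complex.exp ((t : ℂ) * Complex.I)‖ ^ (a + 1)
      ≤ (Real.Gamma a / Real.Gamma ((a + 1) / 2) ^ 2) * (1 - ‖w‖ ^ 2) ^ (-a) := by
  set c : ℕ → ℝ := fun n => Ring.choose ((a + 1) / 2 + n - 1) n with hc
  have hc0 : ∀ n, 0 ≤ c n := by
    intro n
    have hl : 0 < (a + 1) / 2 := by positivity
    simp only [hc]
    rw [mc_eq _ hl]
    have p3 := Real.Gamma_pos_of_pos hl
    have p5 : 0 < Real.Gamma ((a + 1) / 2 + n) := Real.Gamma_pos_of_pos (by positivity)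
    positivity
  have hs : HasSum (fun n => c n * ‖w‖ ^ n) (1 / (1 - ‖w‖) ^ ((a + 1) / 2)) :=
    real_series _ (by simpa using hw)
  set B := 1 / (1 - ‖w‖) ^ ((a + 1) / 2) with hB
  have he : ∀ t : ℝ, ‖Complex.exp ((t : ℂ) * Complex.I)‖ = 1 := Complex.norm_exp_ofReal_mul_I
  set F : ℕ → ℝ → ℝ := fun N t =>
    ‖∑ n ∈ Finset.range N, ((c n : ℂ) * w ^ n) * Complex.exp ((t : ℂ) * Complex.I) ^ n‖ ^ 2 with hF
  have hlim : Tendsto (fun N => ∫ t in (0:ℝ)..(2 * π), F N t) atTop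
      (𝓝 (∫ t in (0:ℝ)..(2 * π),
        1 / ‖1 - w * Complex.exp ((t : ℂ) * Complex.I)‖ ^ (a + 1))) := by
    apply intervalIntegral.tendsto_integral_filter_of_dominated_convergence (fun _ => B ^ 2)
    · refine Eventually.of_forall fun N => Continuous.aestronglyMeasurable ?_
      simp only [hF]
      fun_prop
    · refine Eventually.of_forall fun N => Eventually.of_forall fun t _ => ?_
      simp only [hF, Real.norm_eq_abs, abs_pow, abs_norm]
      gcongr
      refine (norm_sum_le _ _).trans ?_
      refine le_trans (Finset.sum_le_sum fun n _ => ?_)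
        (sum_le_hasSum (Finset.range N) (fun n _ => by have := hc0 n; positivity) hs)
      simp [he, abs_of_nonneg (hc0 n)]
    · simp
    · refine Eventually.of_forall fun t _ => ?_
      have hn : ‖w * Complex.exp ((t : ℂ) * Complex.I)‖ < 1 := by simpa [he] using hw
      have h := (cplx_series ((a + 1) / 2) hn).tendsto_sum_nat.norm.pow 2
      have e : ‖1 / (1 - w * Complex.exp ((t : ℂ) * Complex.I)) ^ (((a + 1) / 2 : ℝ) : ℂ)‖ ^ 2
          = 1 / ‖1 - w * Complex.exp ((t : ℂ) * Complex.I)‖ ^ (a + 1) := by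
        rw [norm_div, norm_one, Complex.norm_cpow_real, div_pow, one_pow, ← Real.rpow_natCast,
          ← Real.rpow_mul (norm_nonneg _)]
        congr 2
        push_cast; ring
      rw [e] at h
      refine h.congr fun N => ?_
      simp only [hF, hc, mul_pow, mul_assoc]
  have hr : |‖w‖ ^ 2| < 1 := by
    rw [abs_of_nonneg (by positivity)]
    exact pow_lt_one₀ (norm_nonneg _) hw (by norm_num)
  have hsa := (real_series a hr).mul_left (Real.Gamma a / Real.Gamma ((a + 1) / 2) ^ 2)
  have hpos : 0 ≤ 1 - ‖w‖ ^ 2 := by rw [abs_of_nonneg (by positivity)] at hr; linarith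
  rw [one_div, ← Real.rpow_neg hpos] at hsa
  have hle : ∀ n, ‖(c n : ℂ) * w ^ n‖ ^ 2 ≤ Real.Gamma a / Real.Gamma ((a + 1) / 2) ^ 2 *
      (Ring.choose (a + n - 1) n * (‖w‖ ^ 2) ^ n) := by
    intro n
    have h := coef_le a ha n
    rw [norm_mul, norm_pow, mul_pow, Complex.norm_real, Real.norm_eq_abs, sq_abs, ← mul_assoc,
      ← pow_mul, ← pow_mul, mul_comm n 2]
    gcongr
  refine le_of_tendsto (hlim.const_mul (1 / (2 * π))) (Eventually.of_forall fun N => ?_)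
  simp only [hF]
  rw [parseval_fin]
  refine (Finset.sum_le_sum fun n _ => hle n).trans ?_
  exact sum_le_hasSum _ (fun n _ => (sq_nonneg _).trans (hle n)) hsa

/-- For every `a > 0` and every `z ∈ 𝔻`,
`(1/2π) ∫₀^{2π} dt/|1 - z e^{-it}|^{a+1} ≤ (Γ(a)/Γ((a+1)/2)²) (1-|z|²)^{-a}`. -/
theorem stmt17 (a : ℝ) (ha : 0 < a) (z : ℂ) (hz : z ∈ ball (0:ℂ) 1) :
    (1 / (2 * π)) * ∫ t in (0:ℝ)..(2 * π),
        1 / ‖1 - z * Complex.exp (-(t : ℂ) * Complex.I)‖ ^ (a + 1)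
      ≤ (Real.Gamma a / Real.Gamma ((a + 1) / 2) ^ 2) * (1 - ‖z‖ ^ 2) ^ (-a) := by
  have hw : ‖(starRingEnd ℂ) z‖ < 1 := by simpa using hz
  have h := main_bound a ha _ hw
  rw [RCLike.norm_conj] at h
  convert h using 6 with t
  rw [← RCLike.norm_conj]
  simp [← Complex.exp_conj]

end
end
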